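/- arXiv:1906.09368 — 8 statements merged into one kernel-verified Lean document; each statement's English description precedes it below -/
import Mathlib

section
/- For every automorphism θ of the free group F₂ on two generators a, b, there exists an element h ∈ F₂ such that θ²([a,b]) = h⁻¹·[a,b]·h, where θ² = θ ∘ θ and [a,b] = a⁻¹b⁻¹ab. -/
/-- The free group on two generators. -/
abbrev F₂ : Type := FreeGroup (Fin 2)

/-- The two generators of `F₂`. -/
def genA : F₂ := FreeGroup.of 0
def genB : F₂ := FreeGroup.of 1

namespace SqAut

open FreeGroup

/-- length of the longest common prefix -/
def lcp : List (Fin 2 × Bool) → List (Fin 2 × Bool) → ℕ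
  | s :: u, t :: v => if s = t then lcp u v + 1 else 0
  | _, _ => 0

lemma lcp_hyp (u v w : List (Fin 2 × Bool)) : min (lcp u v) (lcp v w) ≤ lcp u w := by
  induction u generalizing v w with
  | nil => simp [lcp]
  | cons s u ih =>
    cases v with
    | nil => simp [lcp]
    | cons t v =>
      cases w with
      | nil => simp [lcp]
      | cons r w =>
        have := ih v w
        by_cases h1 : s = t <;> by_cases h2 : t = r
        · subst h1; subst h2; simp [lcp]; omega
        · simp [lcp, h2]
        · simp [lcp, h1]
        · simp [lcp, h1]

lemma norm_mk_of_reduced {u : List (Fin 2 × Bool)} (hu : FreeGroup.IsReduced u) :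
    FreeGroup.norm (mk u) = u.length := by
  rw [FreeGroup.norm, toWord_mk, hu.reduce_eq]

lemma lcp_norm (u v : List (Fin 2 × Bool)) (hu : FreeGroup.IsReduced u) (hv : FreeGroup.IsReduced v) :
    FreeGroup.norm ((mk u)⁻¹ * mk v) + 2 * lcp u v = u.length + v.length := by
  induction u generalizing v with
  | nil =>
    have : (mk ([] : List (Fin 2 × Bool))) = 1 := rfl
    simp [lcp, this, norm_mk_of_reduced hv]
  | cons s u ih =>
    cases v with
    | nil =>
      have : (mk ([] : List (Fin 2 × Bool))) = 1 := rfl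
      rw [this, mul_one, norm_inv_eq, norm_mk_of_reduced hu]
      simp [lcp]
    | cons t v =>
      by_cases h : s = t
      · subst h
        have e1 : ∀ z : List (Fin 2 × Bool), mk (s :: z) = mk [s] * mk z := fun z => by
          rw [mul_mk]; rfl
        have := ih v (hu.infix (List.suffix_cons s u).isInfix)
          (hv.infix (List.suffix_cons s v).isInfix)
        rw [e1 u, e1 v]
        have e2 : (mk [s] * mk u)⁻¹ * (mk [s] * mk v) = (mk u)⁻¹ * mk v := by group
        rw [e2]
        simp only [lcp, if_true, List.length_cons]; omega
      · rw [inv_mk, mul_mk, norm_mk_of_reduced]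
        · simp [lcp, h]
        · have hi : FreeGroup.IsReduced (invRev (s :: u)) := by
            rw [isReduced_iff_reduce_eq, reduce_invRev, hu.reduce_eq]
          unfold FreeGroup.IsReduced at hi hv ⊢
          rw [List.isChain_append]
          refine ⟨hi, hv, ?_⟩
          intro p hp q hq
          obtain ⟨s1, s2⟩ := s
          obtain ⟨t1, t2⟩ := t
          simp [invRev] at hp hq
          subst hp; subst hq
          simp at h ⊢
          intro h1
          have := h h1
          revert this
          cases s2 <;> cases t2 <;> simp

/-- Gromov product -/
def gp (g h : F₂) : ℕ := lcp g.toWord h.toWord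

lemma gp_hyp (g h k : F₂) : min (gp g h) (gp h k) ≤ gp g k := lcp_hyp _ _ _

lemma gp_norm (g h : F₂) : FreeGroup.norm (g⁻¹ * h) + 2 * gp g h = FreeGroup.norm g + FreeGroup.norm h := by
  have := lcp_norm g.toWord h.toWord isReduced_toWord isReduced_toWord
  rw [mk_toWord, mk_toWord] at this
  exact this

lemma gp_comm (g h : F₂) : gp g h = gp h g := by
  have h1 := gp_norm g h
  have h2 := gp_norm h g
  have h3 : FreeGroup.norm (g⁻¹ * h) = FreeGroup.norm (h⁻¹ * g) := by
    rw [← norm_inv_eq]; congr 1; group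
  omega

lemma norm_sq (x : F₂) (hx : x ≠ 1) : FreeGroup.norm x < FreeGroup.norm (x * x) := by
  have hr : FreeGroup.IsReduced x.toWord := isReduced_toWord
  have h2 := reduceCyclically.reduce_flatten_replicate_succ hr 1
  have h1 := reduceCyclically.reduce_flatten_replicate_succ hr 0
  have e2 := toWord_mul x x
  simp [List.replicate] at h1 h2
  have l1 := congrArg List.length h1
  have l2 := congrArg List.length h2
  have hne : reduceCyclically x.toWord ≠ [] := by
    intro h0
    rw [h0] at h1
    apply hx
    rw [← mk_toWord (x := x), h1]
    rw [List.nil_append, ← mul_mk, ← inv_mk, mul_inv_cancel]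
  have := List.length_pos_iff.mpr hne
  unfold FreeGroup.norm
  rw [e2]
  simp at l1 l2
  omega

lemma gp_self_inv (x : F₂) (hx : x ≠ 1) : 2 * gp x x⁻¹ < FreeGroup.norm x := by
  have h1 := gp_norm x x⁻¹
  have h2 := norm_sq x hx
  have h3 : FreeGroup.norm (x⁻¹ * x⁻¹) = FreeGroup.norm (x * x) := by
    rw [← norm_inv_eq, mul_inv_rev, inv_inv]
  rw [h3, norm_inv_eq] at h1
  omega

lemma exists_split (x : F₂) (m : ℕ) (hm : FreeGroup.norm x = 2 * m) :
    ∃ p q : F₂, x = p * q ∧ FreeGroup.norm p = m ∧ FreeGroup.norm q = m := by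
  have hr : FreeGroup.IsReduced x.toWord := isReduced_toWord
  refine ⟨mk (x.toWord.take m), mk (x.toWord.drop m), ?_, ?_, ?_⟩
  · rw [mul_mk, List.take_append_drop, mk_toWord]
  · rw [norm_mk_of_reduced (hr.infix (List.take_prefix _ _).isInfix), List.length_take]
    unfold FreeGroup.norm at hm; omega
  · rw [norm_mk_of_reduced (hr.infix (List.drop_suffix _ _).isInfix), List.length_drop]
    unfold FreeGroup.norm at hm; omega

lemma word_lemma (l : Fin 2 × Bool → F₂) (hl : ∀ i b, l (i, !b) = (l (i, b))⁻¹)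
    (hpos : ∀ i, 0 < FreeGroup.norm (l i))
    (hP : ∀ i j, i ≠ j → 2 * gp (l i) (l j) ≤ FreeGroup.norm (l j))
    (hQ : ∀ i j k : Fin 2 × Bool, i ≠ j → (j.1, !j.2) ≠ k →
      gp (l i) (l j) + gp (l j)⁻¹ (l k) < FreeGroup.norm (l j)) :
    ∀ (L : List (Fin 2 × Bool)) (j : Fin 2 × Bool), FreeGroup.IsReduced (j :: L) →
      ∀ i, i ≠ j → gp (l i) (((j :: L).map l).prod) ≤ gp (l i) (l j) ∧
        gp (l i) (l j) + (L.length + 1) ≤ FreeGroup.norm (((j :: L).map l).prod) := by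
  intro L
  induction L with
  | nil =>
    intro j _ i hij
    have := hP i j hij
    have := hpos j
    simp
    omega
  | cons k L ih =>
    intro j hj i hij
    have hk : FreeGroup.IsReduced (k :: L) := hj.infix (List.suffix_cons j _).isInfix
    have hjk : (j.1, !j.2) ≠ k := by
      unfold FreeGroup.IsReduced at hj
      rw [List.isChain_cons_cons] at hj
      intro h
      have := hj.1 (by rw [← h])
      rw [← h] at this
      simp at this
    have hIH := ih k hk _ hjk
    have hlj : l (j.1, !j.2) = (l j)⁻¹ := hl j.1 j.2
    rw [hlj] at hIH
    rw [List.map_cons, List.prod_cons]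
    set w' := ((k :: L).map l).prod with hw'
    have q := hQ i j k hij hjk
    have n1 := gp_norm (l j) (l j * w')
    rw [inv_mul_cancel_left] at n1
    have n2 := gp_norm (l j)⁻¹ w'
    rw [inv_inv, norm_inv_eq] at n2
    have hy := gp_hyp (l i) (l j * w') (l j)
    rw [gp_comm (l j * w') (l j)] at hy
    have hy2 := gp_hyp (l i) (l j) (l j * w')
    simp only [List.length_cons]
    obtain ⟨i1, i2⟩ := hIH
    constructor <;> omega

/-- the commutator -/
def cm (x y : F₂) : F₂ := x⁻¹ * y⁻¹ * x * y

def Good (x y : F₂) : Prop :=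
  ∃ h : F₂, cm x y = h⁻¹ * cm genA genB * h ∨ cm x y = h⁻¹ * (cm genA genB)⁻¹ * h

lemma good_conj {x y x' y' g : F₂} (h : cm x' y' = g⁻¹ * cm x y * g) (hg : Good x y) :
    Good x' y' := by
  obtain ⟨k, hk | hk⟩ := hg
  · exact ⟨k * g, Or.inl (by rw [h, hk]; group)⟩
  · exact ⟨k * g, Or.inr (by rw [h, hk]; group)⟩

lemma good_conj_inv {x y x' y' g : F₂} (h : cm x' y' = g⁻¹ * (cm x y)⁻¹ * g) (hg : Good x y) :
    Good x' y' := by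
  obtain ⟨k, hk | hk⟩ := hg
  · exact ⟨k * g, Or.inr (by rw [h, hk]; group)⟩
  · exact ⟨k * g, Or.inl (by rw [h, hk]; group)⟩

/-- a generating pair which is bad -/
def Bad (x y : F₂) : Prop := (∀ H : Subgroup F₂, x ∈ H → y ∈ H → H = ⊤) ∧ ¬ Good x y

lemma Bad.swap {x y : F₂} (h : Bad x y) : Bad y x :=
  ⟨fun H hy hx => h.1 H hx hy, fun hg => h.2 (good_conj_inv (g := 1) (by simp [cm]; group) hg)⟩

lemma Bad.inv {x y : F₂} (h : Bad x y) : Bad x⁻¹ y :=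
  ⟨fun H hx hy => h.1 H (by simpa using hx) hy,
    fun hg => h.2 (good_conj_inv (g := x) (by simp only [cm]; group) hg)⟩

lemma Bad.mul {x y : F₂} (h : Bad x y) : Bad x (x⁻¹ * y) :=
  ⟨fun H hx hy => h.1 H hx (by simpa using H.mul_mem hx hy),
    fun hg => h.2 (good_conj (g := 1) (by simp only [cm]; group) hg)⟩

lemma Bad.conj {x y : F₂} (h : Bad x y) (p : F₂) : Bad (p⁻¹ * x * p) (p⁻¹ * y * p) := by
  refine ⟨fun H hx hy => ?_,
    fun hg => h.2 (good_conj (g := p⁻¹) (by simp only [cm]; group) hg)⟩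
  have := h.1 (H.comap (MulAut.conj p⁻¹).toMonoidHom) (by simpa using hx) (by simpa using hy)
  rw [eq_top_iff] at this ⊢
  intro z _
  have hz := this (Subgroup.mem_top (p * z * p⁻¹))
  simpa [mul_assoc] using hz

/-- a bad pair of minimal length -/
def Mn (x y : F₂) : Prop := Bad x y ∧ ∀ x' y', Bad x' y' → FreeGroup.norm x + FreeGroup.norm y ≤ FreeGroup.norm x' + FreeGroup.norm y'

lemma Mn.swap {x y : F₂} (h : Mn x y) : Mn y x :=
  ⟨h.1.swap, fun x' y' hb => by have := h.2 x' y' hb; omega⟩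

lemma Mn.inv {x y : F₂} (h : Mn x y) : Mn x⁻¹ y :=
  ⟨h.1.inv, fun x' y' hb => by have := h.2 x' y' hb; rwa [norm_inv_eq]⟩

lemma Mn.inv_right {x y : F₂} (h : Mn x y) : Mn x y⁻¹ := h.swap.inv.swap

lemma Mn.ne_one {x y : F₂} (h : Mn x y) : x ≠ 1 := by
  rintro rfl
  have ht := h.1.1 (Subgroup.zpowers y) (one_mem _) (Subgroup.mem_zpowers y)
  have ha : genA ∈ Subgroup.zpowers y := ht ▸ Subgroup.mem_top _
  have hb : genB ∈ Subgroup.zpowers y := ht ▸ Subgroup.mem_top _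
  obtain ⟨m, hm⟩ := Subgroup.mem_zpowers_iff.mp ha
  obtain ⟨n, hn⟩ := Subgroup.mem_zpowers_iff.mp hb
  have : genA * genB = genB * genA := by
    rw [← hm, ← hn, ← zpow_add, ← zpow_add, add_comm]
  revert this
  decide

lemma Mn.gp_le {x y : F₂} (h : Mn x y) : 2 * gp x y ≤ FreeGroup.norm x := by
  have := h.2 _ _ h.1.mul
  have := gp_norm x y
  omega

lemma Mn.gp_le_right {x y : F₂} (h : Mn x y) : 2 * gp x y ≤ FreeGroup.norm y := by
  have := h.swap.gp_le
  rwa [gp_comm] at this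

lemma Mn.not_half {x y : F₂} (h : Mn x y) (h1 : 2 * gp x y = FreeGroup.norm x)
    (h2 : 2 * gp x⁻¹ y⁻¹ = FreeGroup.norm x) : False := by
  have hxy := h.gp_le_right
  have hx0 : FreeGroup.norm x ≠ 0 := fun h0 => h.ne_one (norm_eq_zero.mp h0)
  obtain ⟨p, q, rfl, hp, hq⟩ := exists_split x (gp x y) h1.symm
  set m := gp (p * q) y with hm
  have a1 := gp_norm p (p * q)
  rw [inv_mul_cancel_left] at a1
  have a2 := gp_norm q⁻¹ (p * q)⁻¹
  have e2 : q⁻¹⁻¹ * (p * q)⁻¹ = p⁻¹ := by group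
  rw [e2] at a2
  have a3 := gp_hyp p (p * q) y
  have a4 := gp_hyp q⁻¹ (p * q)⁻¹ y⁻¹
  have a5 := gp_norm p y
  have a6 := gp_norm q⁻¹ y⁻¹
  have e6 : FreeGroup.norm (q⁻¹⁻¹ * y⁻¹) = FreeGroup.norm (y * q⁻¹) := by
    rw [← norm_inv_eq]; congr 1; group
  rw [e6] at a6
  have a7 := gp_norm y (y * q⁻¹)
  rw [inv_mul_cancel_left] at a7
  have a8 := gp_hyp p y (y * q⁻¹)
  have a9 := gp_norm p (y * q⁻¹)
  have hb := ((h.1.conj p).swap.inv.swap.inv.mul)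
  have hb := (h.1.conj p).inv.swap.inv.swap.mul
  simp only [norm_inv_eq] at *
  have b1 := h.2 _ _ hb
  have e3 : FreeGroup.norm ((p⁻¹ * (p * q) * p)⁻¹⁻¹ * (p⁻¹ * y * p)⁻¹) = FreeGroup.norm (p⁻¹ * (y * q⁻¹)) := by
    rw [← norm_inv_eq]; congr 1; group
  have e4 : FreeGroup.norm (p⁻¹ * (p * q) * p)⁻¹ ≤ FreeGroup.norm q + FreeGroup.norm p := by
    have : p⁻¹ * (p * q) * p = q * p := by group
    rw [this, norm_inv_eq]; exact norm_mul_le q p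
  rw [e3] at b1
  omega

/-- letters -/
def lt (x y : F₂) (i : Fin 2 × Bool) : F₂ := cond i.2 (![x, y] i.1) (![x, y] i.1)⁻¹

lemma Mn.lt_pair {x y : F₂} (h : Mn x y) (i j : Fin 2 × Bool) (hij : i.1 ≠ j.1) :
    Mn (lt x y i) (lt x y j) := by
  obtain ⟨i, b⟩ := i
  obtain ⟨j, d⟩ := j
  have h' := h.swap
  fin_cases i <;> fin_cases j <;> cases b <;> cases d <;>
    first
      | exact absurd rfl hij
      | exact h
      | exact h.inv
      | exact h.inv_right
      | exact h.inv.inv_right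
      | exact h'
      | exact h'.inv
      | exact h'.inv_right
      | exact h'.inv.inv_right

lemma lt_flip (x y : F₂) (i : Fin 2) (b : Bool) : lt x y (i, !b) = (lt x y (i, b))⁻¹ := by
  cases b <;> simp [lt]

lemma Mn.lt_ne {x y : F₂} (h : Mn x y) (i : Fin 2 × Bool) : lt x y i ≠ 1 := by
  obtain ⟨i, b⟩ := i
  by_cases hi : i = 0
  · exact (h.lt_pair (i, b) (1, true) (by subst hi; simp)).ne_one
  · exact (h.lt_pair (i, b) (0, true) hi).ne_one

lemma ne_cases {i j : Fin 2 × Bool} (h : i ≠ j) : i.1 ≠ j.1 ∨ i = (j.1, !j.2) := by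
  revert i j; decide

lemma letters_aux : ∀ i j k : Fin 2 × Bool, i.1 ≠ j.1 → k.1 ≠ j.1 →
    k = i ∨ k = (i.1, !i.2) := by
  decide

lemma Mn.P {x y : F₂} (h : Mn x y) (i j : Fin 2 × Bool) (hij : i ≠ j) :
    2 * gp (lt x y i) (lt x y j) ≤ FreeGroup.norm (lt x y j) := by
  rcases ne_cases hij with h1 | h1
  · exact (h.lt_pair i j h1).gp_le_right
  · rw [h1, lt_flip, gp_comm]
    exact (gp_self_inv _ (h.lt_ne j)).le

lemma Mn.Q {x y : F₂} (h : Mn x y) (i j k : Fin 2 × Bool) (hij : i ≠ j)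
    (hjk : (j.1, !j.2) ≠ k) :
    gp (lt x y i) (lt x y j) + gp (lt x y j)⁻¹ (lt x y k) < FreeGroup.norm (lt x y j) := by
  have p1 := h.P i j hij
  have p2 := h.P k _ hjk.symm
  rw [lt_flip, norm_inv_eq, gp_comm] at p2
  have s := gp_self_inv _ (h.lt_ne j)
  rcases ne_cases hij with h1 | h1
  swap
  · rw [h1, lt_flip, gp_comm (lt x y (j.1, j.2))⁻¹]
    change 2 * gp (lt x y j)⁻¹ (lt x y k) ≤ FreeGroup.norm (lt x y j) at p2
    change gp (lt x y j) (lt x y j)⁻¹ + _ < _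
    omega
  rcases ne_cases hjk.symm with h2 | h2
  swap
  · simp at h2
    rw [h2] at p2 ⊢
    change 2 * gp (lt x y j)⁻¹ (lt x y j) ≤ FreeGroup.norm (lt x y j) at p2
    rw [gp_comm (lt x y j)⁻¹]
    omega
  change 2 * gp (lt x y j)⁻¹ (lt x y k) ≤ FreeGroup.norm (lt x y j) at p2
  have hki : k = i ∨ k = (i.1, !i.2) := by
    exact letters_aux i j k h1 h2
  by_contra hlt
  have q1 : 2 * gp (lt x y i) (lt x y j) = FreeGroup.norm (lt x y j) := by omega
  have q2 : 2 * gp (lt x y j)⁻¹ (lt x y k) = FreeGroup.norm (lt x y j) := by omega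
  rcases hki with rfl | rfl
  · have := gp_hyp (lt x y j)⁻¹ (lt x y k) (lt x y j)
    rw [gp_comm (lt x y j)⁻¹ (lt x y j)] at this
    omega
  · rw [lt_flip] at q2
    refine (h.lt_pair i j h1).swap.not_half ?_ q2
    rw [gp_comm]; exact q1

lemma Mn.letter {x y : F₂} (h : Mn x y) (g : F₂) (hg : FreeGroup.norm g = 1) :
    ∃ i, g = lt x y i := by
  have ht := h.1.1 (FreeGroup.lift ![x, y]).range ⟨of 0, by simp⟩ ⟨of 1, by simp⟩
  have hm : g ∈ (FreeGroup.lift ![x, y]).range := ht ▸ Subgroup.mem_top _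
  obtain ⟨u, hu⟩ := hm
  have hprod : ((u.toWord).map (lt x y)).prod = g := by
    rw [← hu]
    conv_rhs => rw [← mk_toWord (x := u)]
    rw [lift_mk]
    rfl
  have hr : FreeGroup.IsReduced u.toWord := isReduced_toWord
  rcases hL : u.toWord with _ | ⟨j, L⟩
  · rw [hL] at hprod
    simp at hprod
    rw [← hprod] at hg
    simp at hg
  · rw [hL] at hprod hr
    have := (word_lemma (lt x y) (lt_flip x y)
      (fun i => Nat.pos_of_ne_zero fun h0 => h.lt_ne i (norm_eq_zero.mp h0)) h.P h.Q
      L j hr (j.1, !j.2) (by intro h; have := congrArg Prod.snd h; simp at this)).2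
    rw [hprod, hg] at this
    have hL0 : L = [] := by
      rw [← List.length_eq_zero_iff]; omega
    subst hL0
    exact ⟨j, by simpa using hprod.symm⟩

lemma not_Mn (x y : F₂) : ¬ Mn x y := by
  intro h
  obtain ⟨i, hi⟩ := h.letter genA (norm_of _)
  obtain ⟨j, hj⟩ := h.letter genB (norm_of _)
  by_cases hij : i.1 = j.1
  · by_cases h2 : i = j
    · rw [h2, ← hj] at hi
      revert hi; decide
    · rcases ne_cases h2 with h3 | h3
      · exact h3 hij
      · rw [h3, lt_flip] at hi
        change genA = (lt x y j)⁻¹ at hi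
        rw [← hj] at hi
        revert hi; decide
  · have := h.lt_pair i j hij
    rw [← hi, ← hj] at this
    exact this.1.2 ⟨1, Or.inl (by group)⟩

lemma not_Bad : ∀ (n : ℕ) (x y : F₂), FreeGroup.norm x + FreeGroup.norm y = n → ¬ Bad x y := by
  intro n
  induction n using Nat.strong_induction_on with
  | _ n ih =>
    intro x y hn hb
    refine not_Mn x y ⟨hb, fun x' y' hb' => ?_⟩
    by_contra hlt
    exact ih _ (by omega) x' y' rfl hb'

lemma good_aut (θ : MulAut F₂) : Good (θ genA) (θ genB) := by
  by_contra hg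
  refine not_Bad _ (θ genA) (θ genB) rfl ⟨fun H ha hb => ?_, hg⟩
  rw [eq_top_iff]
  intro z _
  have key : ∀ w : F₂, θ w ∈ H := by
    intro w
    induction w using FreeGroup.induction_on with
    | C1 => simpa using H.one_mem
    | of i => fin_cases i; exacts [ha, hb]
    | inv_of i hi => simpa using hi
    | mul u v hu hv => rw [_root_.map_mul]; exact H.mul_mem hu hv
  simpa using key (θ.symm z)

end SqAut

/-- For every automorphism `θ` of the free group on two generators `a, b`, there is
`h ∈ F₂` with `θ²([a,b]) = h⁻¹ · [a,b] · h`, where `[a,b] = a⁻¹b⁻¹ab`. -/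
theorem squared_aut_commutator_conjugate (θ : MulAut F₂) :
    ∃ h : F₂,
      θ (θ (genA⁻¹ * genB⁻¹ * genA * genB)) =
        h⁻¹ * (genA⁻¹ * genB⁻¹ * genA * genB) * h := by
  change ∃ h : F₂, θ (θ (SqAut.cm genA genB)) = h⁻¹ * SqAut.cm genA genB * h
  have e : θ (SqAut.cm genA genB) = SqAut.cm (θ genA) (θ genB) := by simp [SqAut.cm]
  obtain ⟨h, hh | hh⟩ := SqAut.good_aut θ
  · rw [← e] at hh
    refine ⟨h * θ h, ?_⟩
    rw [hh, map_mul, map_mul, hh, map_inv]; group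
  · rw [← e] at hh
    refine ⟨h * θ h, ?_⟩
    rw [hh, map_mul, map_mul, map_inv, map_inv, hh]; group
end

section
/- For every automorphism θ of the free group F₂ on two generators a, b, there exists an element h ∈ F₂ such that either θ([a,b]) = h⁻¹·[a,b]·h or θ([a,b]) = h⁻¹·[a,b]⁻¹·h; that is, θ sends [a,b] to a conjugate of [a,b] or of [a,b]⁻¹. -/
/-- Length of the longest common prefix of two words. -/
def lcp : List (Fin 2 × Bool) → List (Fin 2 × Bool) → ℕ
  | [], _ => 0
  | _ :: _, [] => 0
  | x :: l, y :: m => if x = y then lcp l m + 1 else 0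

theorem lcp_min (l m n : List (Fin 2 × Bool)) : min (lcp l m) (lcp m n) ≤ lcp l n := by
  induction l generalizing m n with
  | nil => simp [lcp]
  | cons x l ih =>
    cases m with
    | nil => simp [lcp]
    | cons y m =>
      cases n with
      | nil => simp [lcp]
      | cons z n =>
        have := ih m n
        by_cases h1 : x = y
        · by_cases h2 : y = z
          · subst h1; subst h2; simp [lcp]; omega
          · simp [lcp, h2]
        · simp [lcp, h1]

theorem lcp_comm (l m : List (Fin 2 × Bool)) : lcp l m = lcp m l := by
  induction l generalizing m with
  | nil => cases m <;> simp [lcp]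
  | cons x l ih =>
    cases m with
    | nil => simp [lcp]
    | cons y m => simp [lcp, ih m, eq_comm]

theorem lcp_get (l m : List (Fin 2 × Bool)) (i : ℕ) (h : i < lcp l m) : l[i]? = m[i]? := by
  induction l generalizing m i with
  | nil => simp [lcp] at h
  | cons x l ih =>
    cases m with
    | nil => simp [lcp] at h
    | cons y m =>
      by_cases h1 : x = y
      · subst h1
        simp [lcp] at h
        cases i with
        | zero => simp
        | succ i => simpa using ih m i (by omega)
      · simp [lcp, h1] at h

theorem isReduced_invRev {l : List (Fin 2 × Bool)} (h : FreeGroup.IsReduced l) :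
    FreeGroup.IsReduced (FreeGroup.invRev l) := by
  rw [FreeGroup.isReduced_iff_reduce_eq, FreeGroup.reduce_invRev, h.reduce_eq]

theorem norm_lcp (l m : List (Fin 2 × Bool)) (hl : FreeGroup.IsReduced l)
    (hm : FreeGroup.IsReduced m) :
    (FreeGroup.reduce (FreeGroup.invRev l ++ m)).length + 2 * lcp l m = l.length + m.length := by
  induction l generalizing m with
  | nil => simp [lcp, hm.reduce_eq]
  | cons x l ih =>
    cases m with
    | nil =>
      rw [List.append_nil, (isReduced_invRev hl).reduce_eq]; simp [lcp]
    | cons y m =>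
      by_cases h : x = y
      · subst h
        have h1 : FreeGroup.reduce (FreeGroup.invRev (x :: l) ++ x :: m)
            = FreeGroup.reduce (FreeGroup.invRev l ++ m) := by
          apply FreeGroup.reduce.sound
          rw [← FreeGroup.mul_mk, ← FreeGroup.mul_mk, ← FreeGroup.inv_mk, ← FreeGroup.inv_mk,
            ← List.singleton_append, ← FreeGroup.mul_mk,
            ← List.singleton_append (l := m), ← FreeGroup.mul_mk]
          group
        have := ih m (List.IsChain.tail hl) (List.IsChain.tail hm)
        rw [h1]
        simp [lcp]
        omega
      · have : FreeGroup.IsReduced (FreeGroup.invRev (x :: l) ++ y :: m) := by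
          have h2 := isReduced_invRev hl
          unfold FreeGroup.IsReduced at *
          rw [List.isChain_append]
          refine ⟨h2, hm, ?_⟩
          rcases x with ⟨x1, x2⟩
          rcases y with ⟨y1, y2⟩
          simp [FreeGroup.invRev]
          rintro rfl
          simp at h
          cases x2 <;> cases y2 <;> simp_all
        rw [this.reduce_eq]
        simp [lcp, h]
        

/-- Gromov product. -/
def gp (x y : F₂) : ℕ := lcp x.toWord y.toWord

theorem gp_norm (x y : F₂) : (x⁻¹ * y).norm + 2 * gp x y = x.norm + y.norm := by
  have := norm_lcp x.toWord y.toWord FreeGroup.isReduced_toWord FreeGroup.isReduced_toWord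
  rw [← FreeGroup.toWord_inv, ← FreeGroup.toWord_mul] at this
  exact this

theorem gp_min (x y z : F₂) : min (gp x y) (gp y z) ≤ gp x z := lcp_min _ _ _

theorem gp_comm (x y : F₂) : gp x y = gp y x := lcp_comm _ _

theorem gp_mid (x : F₂) (k : ℕ) (h : k ≤ x.norm) :
    ∃ p q : F₂, x = p * q ∧ p.norm = k ∧ q.norm = x.norm - k := by
  have hr : FreeGroup.IsReduced (x.toWord) := FreeGroup.isReduced_toWord
  have h1 : FreeGroup.IsReduced (x.toWord.take k) := List.IsChain.take hr k
  have h2 : FreeGroup.IsReduced (x.toWord.drop k) := List.IsChain.drop hr k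
  refine ⟨FreeGroup.mk (x.toWord.take k), FreeGroup.mk (x.toWord.drop k), ?_, ?_, ?_⟩
  · simp [FreeGroup.mk_toWord]
  · simp only [FreeGroup.norm, FreeGroup.toWord_mk, h1.reduce_eq] at *
    simpa using h
  · simp only [FreeGroup.norm, FreeGroup.toWord_mk, h2.reduce_eq] at *
    simp

theorem gp_sq (y : F₂) (h : y ≠ 1) : 2 * gp y⁻¹ y < y.norm := by
  by_contra hc
  have hr : FreeGroup.IsReduced (y.toWord) := FreeGroup.isReduced_toWord
  have hn : y.norm ≠ 0 := by simpa using h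
  rw [gp, FreeGroup.toWord_inv] at hc
  rw [FreeGroup.norm] at hc hn
  generalize y.toWord = l at *
  have hi := lcp_get (FreeGroup.invRev l) l ((l.length - 1) / 2) (by omega)
  have hlt : (l.length - 1) / 2 < l.length := by omega
  rw [FreeGroup.invRev, List.getElem?_reverse (by simpa using hlt), List.getElem?_map,
    List.length_map] at hi
  rcases Nat.even_or_odd' l.length with ⟨k, hk | hk⟩
  · have e1 : l.length - 1 - (l.length - 1) / 2 = k := by omega
    have e2 : (l.length - 1) / 2 = k - 1 := by omega
    rw [e1, e2] at hi
    have hh := (List.isChain_iff_getElem.1 hr) (k - 1) (by omega)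
    have e3 : k - 1 + 1 = k := by omega
    simp only [e3] at hh
    rw [List.getElem?_eq_getElem (by omega), List.getElem?_eq_getElem (by omega)] at hi
    simp at hi
    rw [← hi] at hh
    simp at hh
  · have e1 : l.length - 1 - (l.length - 1) / 2 = k := by omega
    have e2 : (l.length - 1) / 2 = k := by omega
    rw [e1, e2] at hi
    rw [List.getElem?_eq_getElem (by omega)] at hi
    simp at hi
    have := congrArg Prod.snd hi
    simp at this

/-- Commutator class. -/
def TT (w : F₂) : Prop :=
  ∃ h : F₂, w = h⁻¹ * (genA⁻¹ * genB⁻¹ * genA * genB) * h ∨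
      w = h⁻¹ * (genA⁻¹ * genB⁻¹ * genA * genB)⁻¹ * h

theorem TT_inv {w : F₂} (h : TT w) : TT w⁻¹ := by
  obtain ⟨h, rfl | rfl⟩ := h
  · exact ⟨h, Or.inr (by group)⟩
  · exact ⟨h, Or.inl (by group)⟩

theorem TT_conj {w : F₂} (g : F₂) (h : TT w) : TT (g * w * g⁻¹) := by
  obtain ⟨h, rfl | rfl⟩ := h
  · exact ⟨h * g⁻¹, Or.inl (by group)⟩
  · exact ⟨h * g⁻¹, Or.inr (by group)⟩

/-- Generating pairs which are counterexamples. -/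
def GG (u v : F₂) : Prop :=
  (genA ∈ Subgroup.closure {u, v} ∧ genB ∈ Subgroup.closure {u, v}) ∧ ¬ TT (u⁻¹ * v⁻¹ * u * v)

theorem GG_of {u v u' v' : F₂} (h : GG u v) (h1 : u ∈ Subgroup.closure {u', v'})
    (h2 : v ∈ Subgroup.closure {u', v'})
    (h3 : TT (u'⁻¹ * v'⁻¹ * u' * v') → TT (u⁻¹ * v⁻¹ * u * v)) : GG u' v' := by
  have hle : Subgroup.closure {u, v} ≤ Subgroup.closure {u', v'} := by
    rw [Subgroup.closure_le]
    rintro x (rfl | rfl)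
    · exact h1
    · exact h2
  exact ⟨⟨hle h.1.1, hle h.1.2⟩, fun h' => h.2 (h3 h')⟩

theorem mem_l (u v : F₂) : u ∈ Subgroup.closure {u, v} := Subgroup.subset_closure (by simp)
theorem mem_r (u v : F₂) : v ∈ Subgroup.closure {u, v} := Subgroup.subset_closure (by simp)

theorem GG_swap {u v : F₂} (h : GG u v) : GG v u :=
  GG_of h (mem_r _ _) (mem_l _ _) fun h' => by
    have := TT_inv h'
    convert this using 1
    group

theorem GG_inv {u v : F₂} (h : GG u v) : GG u⁻¹ v :=
  GG_of h (by simpa using inv_mem (mem_l u⁻¹ v)) (mem_r _ _) fun h' => by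
    have := TT_conj u⁻¹ (TT_inv h')
    convert this using 1
    group

theorem GG_mul {u v : F₂} (h : GG u v) : GG u (u * v) :=
  GG_of h (mem_l _ _)
    (by simpa using mul_mem (inv_mem (mem_l u (u * v))) (mem_r u (u * v))) fun h' => by
    convert h' using 1
    group

theorem GG_mul' {u v : F₂} (h : GG u v) : GG (u * v) v := by
  have h1 := GG_inv (GG_swap (GG_inv (GG_mul (GG_inv (GG_swap (GG_inv h))))))
  -- (v⁻¹, u⁻¹) ↦ (v⁻¹, v⁻¹ u⁻¹) ↦ (u v, v)
  have h2 := GG_swap (GG_inv (GG_swap h1))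
  simpa using GG_swap (GG_inv (GG_swap h2))

theorem GG_conj {u v : F₂} (g : F₂) (h : GG u v) : GG (g * u * g⁻¹) (g * v * g⁻¹) := by
  refine ⟨?_, fun h' => h.2 ?_⟩
  · have key : ∀ x : F₂, x ∈ Subgroup.closure {u, v} →
        g * x * g⁻¹ ∈ Subgroup.closure {g * u * g⁻¹, g * v * g⁻¹} := by
      intro x hx
      have := Subgroup.mem_map_of_mem (MulAut.conj g).toMonoidHom hx
      rw [MonoidHom.map_closure, Set.image_pair] at this
      simpa using this
    have htop : ∀ x : F₂, x ∈ Subgroup.closure {u, v} := by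
      intro x
      induction x using FreeGroup.induction_on with
      | C1 => exact one_mem _
      | of i => fin_cases i; exacts [h.1.1, h.1.2]
      | inv_of i hi => exact inv_mem hi
      | mul x y hx hy => exact mul_mem hx hy
    constructor
    · have := key (g⁻¹ * genA * g) (htop _)
      convert this using 1; group
    · have := key (g⁻¹ * genB * g) (htop _)
      convert this using 1; group
  · have := TT_conj g⁻¹ h'
    convert this using 1
    group

theorem GG_ne {u v : F₂} (h : GG u v) : v ≠ 1 := by
  rintro rfl
  have hle : Subgroup.closure {u, 1} ≤ Subgroup.zpowers u := by
    rw [Subgroup.closure_le]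
    rintro x (rfl | rfl)
    · exact Subgroup.mem_zpowers _
    · exact one_mem _
  obtain ⟨m, hm⟩ := hle h.1.1
  obtain ⟨n, hn⟩ := hle h.1.2
  have : genA * genB = genB * genA := by
    rw [← hm, ← hn]; simp only; rw [← zpow_add, ← zpow_add, add_comm]
  revert this
  unfold genA genB
  decide

/-- Minimal counterexample pairs. -/
def MM (N : ℕ) (u v : F₂) : Prop :=
  GG u v ∧ u.norm + v.norm = N ∧ ∀ u' v' : F₂, GG u' v' → N ≤ u'.norm + v'.norm

theorem MM_swap {N : ℕ} {u v : F₂} (h : MM N u v) : MM N v u :=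
  ⟨GG_swap h.1, by rw [add_comm]; exact h.2.1, h.2.2⟩

theorem MM_inv {N : ℕ} {u v : F₂} (h : MM N u v) : MM N u⁻¹ v :=
  ⟨GG_inv h.1, by rw [FreeGroup.norm_inv_eq]; exact h.2.1, h.2.2⟩

theorem MM_le {N : ℕ} {u v : F₂} (h : MM N u v) :
    2 * gp u⁻¹ v ≤ u.norm ∧ 2 * gp u⁻¹ v ≤ v.norm := by
  have h1 := h.2.2 _ _ (GG_mul h.1)
  have h2 := h.2.2 _ _ (GG_mul' h.1)
  have h3 := h.2.1
  have h4 := gp_norm u⁻¹ v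
  rw [inv_inv, FreeGroup.norm_inv_eq] at h4
  omega

theorem MM_ne {N : ℕ} {u v : F₂} (h : MM N u v) : v.norm ≠ 0 := by
  simpa using GG_ne h.1

/-- Triples `x y x`. -/
theorem MM_same {N : ℕ} {x y : F₂} (h : MM N x y) : gp x⁻¹ y + gp y⁻¹ x < y.norm := by
  by_contra hc
  have h1 := MM_le h
  have h2 := MM_le (MM_swap h)
  have h0 := MM_ne h
  obtain ⟨p, q, hy, hp, hq⟩ := gp_mid y (gp x⁻¹ y) (by omega)
  obtain ⟨k, hk⟩ : ∃ k, k = gp x⁻¹ y := ⟨_, rfl⟩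
  have e1 := gp_norm p y
  have e1' : p⁻¹ * y = q := by rw [hy]; group
  rw [e1'] at e1
  have e2 := gp_norm q⁻¹ y⁻¹
  have e2' : q⁻¹⁻¹ * y⁻¹ = p⁻¹ := by rw [hy]; group
  rw [e2', FreeGroup.norm_inv_eq, FreeGroup.norm_inv_eq, FreeGroup.norm_inv_eq] at e2
  have e3 := gp_min x⁻¹ y p
  rw [gp_comm y p] at e3
  have e4 := gp_norm x⁻¹ p
  rw [inv_inv, FreeGroup.norm_inv_eq] at e4
  have e5 := gp_min q⁻¹ y⁻¹ x
  have e6 := gp_norm x (x * p)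
  rw [inv_mul_cancel_left] at e6
  have e7 := gp_min q⁻¹ x (x * p)
  have e8 := gp_norm q⁻¹ (x * p)
  rw [inv_inv, FreeGroup.norm_inv_eq] at e8
  have e9 := FreeGroup.norm_mul_le q p
  have e10 := FreeGroup.norm_mul_le x p
  have e11 := FreeGroup.norm_mul_le (x * p) p⁻¹
  rw [mul_inv_cancel_right, FreeGroup.norm_inv_eq] at e11
  have hG := h.2.2 _ _ (GG_conj q (GG_mul' h.1))
  have f1 : q * (x * y) * q⁻¹ = q * (x * p) := by rw [hy]; group
  have f2 : q * y * q⁻¹ = q * p := by rw [hy]; group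
  rw [f1, f2] at hG
  have := h.2.1
  omega

/-- Triples `x⁻¹ y x`. -/
theorem MM_opp {N : ℕ} {x y : F₂} (h : MM N x y) : gp x y + gp y⁻¹ x < y.norm := by
  have h1 := MM_le (MM_inv h)
  have h2 := MM_le (MM_swap h)
  have h0 := GG_ne h.1
  have h3 := gp_min y⁻¹ x y
  have h4 := gp_sq y h0
  rw [inv_inv] at h1
  omega

/-- Value of a letter. -/
def ev (u v : F₂) (s : Fin 2 × Bool) : F₂ := cond s.2 (![u, v] s.1) (![u, v] s.1)⁻¹

/-- Admissible consecutive letters. -/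
def adm (s t : Fin 2 × Bool) : Prop := s.1 = t.1 → s.2 = t.2

theorem MM_ev {N : ℕ} {u v : F₂} (h : MM N u v) (s t : Fin 2 × Bool) (hst : s.1 ≠ t.1) :
    MM N (ev u v s) (ev u v t) := by
  have h1 := MM_swap h
  have h2 := MM_inv h
  have h3 := MM_inv h1
  have h4 := MM_swap h2
  have h5 := MM_swap h3
  have h6 := MM_inv h4
  have h7 := MM_swap h6
  rcases s with ⟨s, _ | _⟩ <;> rcases t with ⟨t, _ | _⟩ <;> fin_cases s <;> fin_cases t <;>
    simp [ev] at * <;> assumption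

theorem ev_ne {N : ℕ} {u v : F₂} (h : MM N u v) (s : Fin 2 × Bool) : ev u v s ≠ 1 := by
  exact GG_ne (MM_ev h (s.1 + 1, true) s (by rcases s with ⟨s, _⟩; fin_cases s <;> simp)).1

theorem pair_le {N : ℕ} {u v : F₂} (h : MM N u v) (s t : Fin 2 × Bool) (hst : adm s t) :
    2 * gp (ev u v s)⁻¹ (ev u v t) ≤ (ev u v s).norm ∧
    2 * gp (ev u v s)⁻¹ (ev u v t) ≤ (ev u v t).norm := by
  by_cases h1 : s.1 = t.1
  · have : s = t := Prod.ext h1 (hst h1)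
    subst this
    have := gp_sq _ (ev_ne h s)
    omega
  · exact MM_le (MM_ev h s t h1)

theorem triple {N : ℕ} {u v : F₂} (h : MM N u v) (s t r : Fin 2 × Bool) (hst : adm s t)
    (htr : adm t r) :
    gp (ev u v s)⁻¹ (ev u v t) + gp (ev u v t)⁻¹ (ev u v r) < (ev u v t).norm := by
  have a1 := pair_le h s t hst
  have a2 := pair_le h t r htr
  have a3 := gp_sq _ (ev_ne h t)
  by_cases h1 : s.1 = t.1
  · have : s = t := Prod.ext h1 (hst h1)
    subst this
    omega
  by_cases h2 : t.1 = r.1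
  · have : t = r := Prod.ext h2 (htr h2)
    subst this
    omega
  have h3 : s.1 = r.1 := by omega
  by_cases h4 : s.2 = r.2
  · have : s = r := Prod.ext h3 h4
    subst this
    exact MM_same (MM_ev h s t h1)
  · have : (ev u v s)⁻¹ = ev u v r := by
      rcases s with ⟨s, _ | _⟩ <;> rcases r with ⟨r, _ | _⟩ <;> simp [ev] at * <;> simp [h3]
    rw [this]
    exact MM_opp (MM_ev h r t (fun h => h2 h.symm))

theorem local_global {N : ℕ} {u v : F₂} (h : MM N u v) (l : List (Fin 2 × Bool)) :
    ∀ t, (t :: l).IsChain adm →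
    (∀ s, adm s t → gp (ev u v s)⁻¹ (((t :: l).map (ev u v)).prod)
        = gp (ev u v s)⁻¹ (ev u v t) ∧
      gp (ev u v s)⁻¹ (ev u v t) + 1 ≤ (((t :: l).map (ev u v)).prod).norm) ∧
    (l ≠ [] → 2 ≤ (((t :: l).map (ev u v)).prod).norm) := by
  induction l with
  | nil =>
    intro t _
    refine ⟨fun s hs => ⟨by simp, ?_⟩, by simp⟩
    have := pair_le h s t hs
    have h0 : (ev u v t).norm ≠ 0 := by simpa using ev_ne h t
    simp
    omega
  | cons r l ih =>
    intro t hc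
    rw [List.isChain_cons_cons] at hc
    obtain ⟨i1, i2⟩ := (ih r hc.2).1 t hc.1
    rw [List.map_cons, List.prod_cons]
    generalize ((r :: l).map (ev u v)).prod = R at *
    have h0 : (ev u v t).norm ≠ 0 := by simpa using ev_ne h t
    have b1 := pair_le h t r hc.1
    have b2 := gp_norm (ev u v t)⁻¹ R
    rw [inv_inv, FreeGroup.norm_inv_eq] at b2
    have b3 := gp_norm (ev u v t) (ev u v t * R)
    rw [inv_mul_cancel_left] at b3
    refine ⟨fun s hs => ?_, fun _ => by omega⟩
    have b4 := triple h s t r hs hc.1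
    have b5 := gp_min (ev u v s)⁻¹ (ev u v t) (ev u v t * R)
    have b6 := gp_min (ev u v s)⁻¹ (ev u v t * R) (ev u v t)
    rw [gp_comm (ev u v t * R) (ev u v t)] at b6
    omega

theorem short {N : ℕ} {u v : F₂} (h : MM N u v) (x : F₂) (hx : x ∈ Subgroup.closure {u, v})
    (h1 : x.norm = 1) : ∃ s, x = ev u v s := by
  have : Subgroup.closure {u, v} ≤ (FreeGroup.lift ![u, v]).range := by
    rw [Subgroup.closure_le]
    rintro x (rfl | rfl)
    · exact ⟨FreeGroup.of 0, by simp⟩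
    · exact ⟨FreeGroup.of 1, by simp⟩
  obtain ⟨w, rfl⟩ := this hx
  have hw : (FreeGroup.lift ![u, v]) w = (w.toWord.map (ev u v)).prod := by
    conv_lhs => rw [← FreeGroup.mk_toWord (x := w)]
    rfl
  have hr : w.toWord.IsChain adm := FreeGroup.isReduced_toWord
  rw [hw] at h1 ⊢
  generalize w.toWord = l at *
  rcases l with _ | ⟨t, _ | ⟨r, l⟩⟩
  · simp at h1
  · exact ⟨t, by simp⟩
  · have := (local_global h _ t hr).2 (by simp)
    omega

theorem no_MM {N : ℕ} {u v : F₂} (h : MM N u v) : False := by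
  obtain ⟨s, hs⟩ := short h genA h.1.1.1 (by simp [genA])
  obtain ⟨t, ht⟩ := short h genB h.1.1.2 (by simp [genB])
  have hst : s.1 ≠ t.1 := by
    intro he
    have : genA = genB ∨ genA = genB⁻¹ := by
      rw [hs, ht]
      rcases s with ⟨s, _ | _⟩ <;> rcases t with ⟨t, _ | _⟩ <;> simp at he <;> simp [ev, he]
    revert this
    unfold genA genB
    decide
  have := MM_ev h s t hst
  rw [← hs, ← ht] at this
  exact this.1.2 ⟨1, Or.inl (by simp)⟩

theorem no_GG (N : ℕ) : ∀ u v : F₂, u.norm + v.norm = N → ¬ GG u v := by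
  induction N using Nat.strong_induction_on with
  | _ N ih =>
    intro u v hN hG
    refine no_MM (N := N) ⟨hG, hN, fun u' v' h' => ?_⟩
    by_contra hlt
    exact ih _ (not_le.1 hlt) u' v' rfl h'

/-- Every automorphism `θ` of the free group on two generators `a, b` sends the commutator
`[a,b] = a⁻¹b⁻¹ab` to a conjugate of `[a,b]` or of `[a,b]⁻¹`. -/
theorem aut_commutator_conjugate (θ : MulAut F₂) :
    ∃ h : F₂,
      θ (genA⁻¹ * genB⁻¹ * genA * genB) =
          h⁻¹ * (genA⁻¹ * genB⁻¹ * genA * genB) * h ∨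
      θ (genA⁻¹ * genB⁻¹ * genA * genB) =
          h⁻¹ * (genA⁻¹ * genB⁻¹ * genA * genB)⁻¹ * h := by
  have key : ∀ x : F₂, θ x ∈ Subgroup.closure {θ genA, θ genB} := by
    intro x
    induction x using FreeGroup.induction_on with
    | C1 => rw [map_one]; exact one_mem _
    | of i => fin_cases i; exacts [mem_l _ _, mem_r _ _]
    | inv_of i hi => rw [map_inv]; exact inv_mem hi
    | mul x y hx hy => rw [map_mul]; exact mul_mem hx hy
  have hT : TT (θ (genA⁻¹ * genB⁻¹ * genA * genB)) := by
    by_contra hc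
    refine no_GG _ (θ genA) (θ genB) rfl ⟨⟨?_, ?_⟩, by simpa using hc⟩
    · simpa using key (θ⁻¹ genA)
    · simpa using key (θ⁻¹ genB)
  exact hT
end

section
/- Let A ∈ SL(2,ℤ) and suppose A has at most linear growth, i.e. there exists a constant C > 0 such that ‖Aⁿ‖ ≤ C·n for all integers n ≥ 1, where ‖M‖ denotes the maximum of the absolute values of the entries of M. Then there exist an integer k > 0, an integer α, and B ∈ SL(2,ℤ) such that B⁻¹·Aᵏ·B is the matrix with rows (1, α) and (0, 1). -/
theorem conj_of_trace_two (M : Matrix.SpecialLinearGroup (Fin 2) ℤ)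
    (ht : M.1 0 0 + M.1 1 1 = 2) :
    ∃ (α : ℤ) (B : Matrix.SpecialLinearGroup (Fin 2) ℤ),
      ((B⁻¹ * M * B : Matrix.SpecialLinearGroup (Fin 2) ℤ) : Matrix (Fin 2) (Fin 2) ℤ) =
        !![1, α; 0, 1] := by
  have hdet := M.2
  rw [Matrix.det_fin_two] at hdet
  obtain ⟨p, q, u, v, h1, h2, h3⟩ : ∃ p q u v : ℤ, p * u + q * v = 1 ∧
      (M.1 0 0 - 1) * p + M.1 0 1 * q = 0 ∧ M.1 1 0 * p + (M.1 1 1 - 1) * q = 0 := by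
    by_cases hc : M.1 1 0 = 0
    · refine ⟨1, 0, 1, 0, by norm_num, ?_, by rw [hc]; norm_num⟩
      rw [hc] at hdet
      have : (M.1 0 0 - 1) ^ 2 = 0 := by linear_combination M.1 0 0 * ht - hdet
      have := pow_eq_zero_iff (two_ne_zero) |>.1 this
      rw [this]; norm_num
    · obtain ⟨g, p, q, hg, hcop, hp, hq⟩ := Int.exists_gcd_one' (m := M.1 0 0 - 1) (n := M.1 1 0)
        (Int.gcd_pos_of_ne_zero_right _ hc)
      have hg0 : (g : ℤ) ≠ 0 := by exact_mod_cast hg.ne'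
      obtain ⟨u, v, huv⟩ := Int.isCoprime_iff_gcd_eq_one.2 hcop
      refine ⟨p, q, u, v, by linear_combination huv, ?_, ?_⟩
      · apply mul_right_cancel₀ hg0
        linear_combination -(M.1 0 0 - 1) * hp - M.1 0 1 * hq + M.1 0 0 * ht - hdet
      · apply mul_right_cancel₀ hg0
        linear_combination -M.1 1 0 * hp - (M.1 1 1 - 1) * hq + M.1 1 0 * ht
  let B : Matrix.SpecialLinearGroup (Fin 2) ℤ :=
    ⟨!![p, -v; q, u], by rw [Matrix.det_fin_two_of]; linear_combination h1⟩
  refine ⟨(B⁻¹ * M * B).1 0 1, B, ?_⟩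
  generalize hα : (B⁻¹ * M * B).1 0 1 = α
  rw [Matrix.SpecialLinearGroup.coe_mul, Matrix.SpecialLinearGroup.coe_mul] at hα ⊢
  rw [Matrix.SpecialLinearGroup.coe_inv, Matrix.adjugate_fin_two] at hα ⊢
  ext i j
  fin_cases i <;> fin_cases j
  · simp [B, Matrix.mul_apply, Fin.sum_univ_two, Matrix.vecMul, dotProduct]
    linear_combination u * h2 + v * h3 + h1
  · exact hα
  · simp [B, Matrix.mul_apply, Fin.sum_univ_two, Matrix.vecMul, dotProduct]
    linear_combination -q * h2 + p * h3
  · simp [B, Matrix.mul_apply, Fin.sum_univ_two, Matrix.vecMul, dotProduct]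
    linear_combination (p * u + q * v) * ht + h1 - u * h2 - v * h3

theorem trace_sq_two (M : Matrix.SpecialLinearGroup (Fin 2) ℤ) :
    (M ^ 2).1 0 0 + (M ^ 2).1 1 1 = (M.1 0 0 + M.1 1 1) ^ 2 - 2 := by
  have hdet := M.2
  rw [Matrix.det_fin_two] at hdet
  rw [pow_two M, Matrix.SpecialLinearGroup.coe_mul]
  simp only [Matrix.mul_apply, Fin.sum_univ_two]
  linear_combination -2 * hdet

theorem trace_cube_two (M : Matrix.SpecialLinearGroup (Fin 2) ℤ) :
    (M ^ 3).1 0 0 + (M ^ 3).1 1 1 =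
      (M.1 0 0 + M.1 1 1) ^ 3 - 3 * (M.1 0 0 + M.1 1 1) := by
  have hdet := M.2
  rw [Matrix.det_fin_two] at hdet
  rw [pow_succ M, pow_two, Matrix.SpecialLinearGroup.coe_mul, Matrix.SpecialLinearGroup.coe_mul]
  simp only [Matrix.mul_apply, Fin.sum_univ_two]
  linear_combination -3 * (M.1 0 0 + M.1 1 1) * hdet

theorem trace_growth (A : Matrix.SpecialLinearGroup (Fin 2) ℤ)
    (h : 3 ≤ |A.1 0 0 + A.1 1 1|) (m : ℕ) :
    2 + 4 ^ m ≤ |(A ^ 2 ^ m).1 0 0 + (A ^ 2 ^ m).1 1 1| := by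
  induction m with
  | zero => simpa using h
  | succ k ih =>
    rw [pow_succ 2 k, pow_mul, trace_sq_two]
    refine le_trans ?_ (le_abs_self _)
    rw [← sq_abs]
    have : (0 : ℤ) < 4 ^ k := by positivity
    rw [pow_succ]
    nlinarith

/-- If `A ∈ SL(2,ℤ)` has at most linear growth, i.e. there is `C > 0` with every entry of
`Aⁿ` of absolute value at most `C·n` for all `n ≥ 1`, then some positive power `Aᵏ` is
conjugate in `SL(2,ℤ)` to the matrix `!![1, α; 0, 1]` for some integer `α`. -/
theorem sl2_linear_growth_conjugate_unipotent
    (A : Matrix.SpecialLinearGroup (Fin 2) ℤ)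
    (hC : ∃ C : ℤ, 0 < C ∧ ∀ n : ℕ, 1 ≤ n → ∀ i j : Fin 2,
      |((A ^ n : Matrix.SpecialLinearGroup (Fin 2) ℤ) : Matrix (Fin 2) (Fin 2) ℤ) i j| ≤ C * n) :
    ∃ (k : ℕ) (α : ℤ) (B : Matrix.SpecialLinearGroup (Fin 2) ℤ), 0 < k ∧
      ((B⁻¹ * A ^ k * B : Matrix.SpecialLinearGroup (Fin 2) ℤ) : Matrix (Fin 2) (Fin 2) ℤ) =
        !![1, α; 0, 1] := by
  obtain ⟨C, hC0, hC⟩ := hC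
  suffices h : ∃ k : ℕ, 0 < k ∧ (A ^ k).1 0 0 + (A ^ k).1 1 1 = 2 by
    obtain ⟨k, hk, ht⟩ := h
    obtain ⟨α, B, hB⟩ := conj_of_trace_two _ ht
    exact ⟨k, α, B, hk, hB⟩
  have hlt : |A.1 0 0 + A.1 1 1| < 3 := by
    by_contra hcon
    have hg := trace_growth A (not_lt.1 hcon) (2 * C).toNat
    generalize hm : (2 * C).toNat = m at hg
    have hmC : (m : ℤ) = 2 * C := by omega
    have h0 := hC (2 ^ m) Nat.one_le_two_pow 0 0
    have h1 := hC (2 ^ m) Nat.one_le_two_pow 1 1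
    have h2 := abs_add_le ((A ^ 2 ^ m).1 0 0) ((A ^ 2 ^ m).1 1 1)
    have h3 : (m : ℤ) < 2 ^ m := by exact_mod_cast Nat.lt_two_pow_self
    have h4 : (4 : ℤ) ^ m = 2 ^ m * 2 ^ m := by rw [← mul_pow]; norm_num
    push_cast at h0 h1
    rw [h4] at hg
    nlinarith
  rw [abs_lt] at hlt
  obtain ⟨hl, hu⟩ := hlt
  have h2 := trace_sq_two A
  have h3 := trace_cube_two A
  have h4 := trace_sq_two (A ^ 2)
  have h6 := trace_sq_two (A ^ 3)
  rw [← pow_mul] at h4 h6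
  rw [h2] at h4
  rw [h3] at h6
  generalize ht : A.1 0 0 + A.1 1 1 = t at hl hu h2 h3 h4 h6
  interval_cases t
  · exact ⟨2, by norm_num, by rw [h2]; norm_num⟩
  · exact ⟨3, by norm_num, by rw [h3]; norm_num⟩
  · exact ⟨2 * 2, by norm_num, by rw [h4]; norm_num⟩
  · exact ⟨3 * 2, by norm_num, by rw [h6]; norm_num⟩
  · exact ⟨1, by norm_num, by rw [pow_one]; exact ht⟩
end

section
/- Let A ∈ SL(2,ℤ) and suppose A = 1 + N for some nonzero 2×2 integer matrix N with N² = 0. Then there exist an integer α and B ∈ SL(2,ℤ) such that B⁻¹·A·B is the matrix with rows (1, α) and (0, 1). (Equivalently, every nonzero 2×2 integer matrix N with N² = 0 is conjugate by an element of SL(2,ℤ) to the matrix with rows (0, α) and (0, 0) for some integer α.) -/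
/-- A primitive kernel vector of a trace-zero, determinant-zero integer matrix. -/
lemma exists_primitive_kernel (a b c : ℤ) (h : a * a + b * c = 0) :
    ∃ p q u v : ℤ, u * p + v * q = 1 ∧ a * p + b * q = 0 ∧ c * p - a * q = 0 := by
  by_cases hc : c = 0
  · subst hc
    have ha : a = 0 := by simpa using h
    exact ⟨1, 0, 1, 0, by simp, by simp [ha], by simp⟩
  · have hg : (Int.gcd a c : ℤ) ≠ 0 := by
      simp [Int.gcd_eq_zero_iff, hc]
    obtain ⟨p, hp⟩ := Int.gcd_dvd_left a c
    obtain ⟨q, hq⟩ := Int.gcd_dvd_right a c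
    have hb := Int.gcd_eq_gcd_ab a c
    generalize (Int.gcd a c : ℤ) = g at *
    refine ⟨p, q, Int.gcdA a c, Int.gcdB a c, ?_, ?_, ?_⟩
    · apply mul_left_cancel₀ hg
      linear_combination -hb - Int.gcdA a c * hp - Int.gcdB a c * hq
    · apply mul_left_cancel₀ hg
      linear_combination h - a * hp - b * hq
    · apply mul_left_cancel₀ hg
      linear_combination a * hq - c * hp

/-- If `A ∈ SL(2,ℤ)` equals `1 + N` for some nonzero integer matrix `N` with `N² = 0`,
then `A` is conjugate in `SL(2,ℤ)` to `!![1, α; 0, 1]` for some integer `α`. -/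
theorem sl2_one_add_nilpotent_conjugate_unipotent
    (A : Matrix.SpecialLinearGroup (Fin 2) ℤ) (N : Matrix (Fin 2) (Fin 2) ℤ)
    (hN0 : N ≠ 0) (hN2 : N ^ 2 = 0)
    (hAN : (A : Matrix (Fin 2) (Fin 2) ℤ) = 1 + N) :
    ∃ (α : ℤ) (B : Matrix.SpecialLinearGroup (Fin 2) ℤ),
      ((B⁻¹ * A * B : Matrix.SpecialLinearGroup (Fin 2) ℤ) : Matrix (Fin 2) (Fin 2) ℤ) =
        !![1, α; 0, 1] := by
  obtain ⟨a, b, c, d, rfl⟩ : ∃ a b c d : ℤ, N = !![a, b; c, d] :=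
    ⟨_, _, _, _, Matrix.eta_fin_two N⟩
  have h00 := congrFun (congrFun hN2 0) 0
  have h01 := congrFun (congrFun hN2 0) 1
  have h10 := congrFun (congrFun hN2 1) 0
  have h11 := congrFun (congrFun hN2 1) 1
  simp [pow_two, Matrix.mul_apply, Fin.sum_univ_two] at h00 h01 h10 h11
  have hd : d = -a := by
    have h3 : (a + d) * b = 0 := by linear_combination h01
    rcases mul_eq_zero.mp h3 with h | h
    · linarith
    · subst h
      have ha : a = 0 := by simpa using h00
      have hd : d = 0 := by simpa using h11
      simp [ha, hd]
  subst hd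
  obtain ⟨p, q, u, v, h1, h2, h3⟩ := exists_primitive_kernel a b c h00
  obtain ⟨B, hB⟩ : ∃ B : Matrix.SpecialLinearGroup (Fin 2) ℤ,
      (B : Matrix (Fin 2) (Fin 2) ℤ) = !![p, -v; q, u] :=
    ⟨⟨!![p, -v; q, u], by rw [Matrix.det_fin_two_of]; linear_combination h1⟩, rfl⟩
  refine ⟨u * (-(a * v) + b * u) + v * (-(c * v) - a * u), B, ?_⟩
  rw [Matrix.SpecialLinearGroup.coe_mul, Matrix.SpecialLinearGroup.coe_mul,
    Matrix.SpecialLinearGroup.coe_inv, hAN, hB, Matrix.adjugate_fin_two_of, Matrix.one_fin_two]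
  ext i j
  fin_cases i <;> fin_cases j <;> simp [Matrix.mul_apply, Fin.sum_univ_two]
  · linear_combination h1 + u * h2 + v * h3
  · ring
  · linear_combination p * h3 - q * h2
  · linear_combination h1 - v * h3 - u * h2
end

section
/- Let G be a group, Ψ an automorphism of G, and n a positive integer. Let π : G ⋊_Ψ ℤ → ℤ/nℤ be the group homomorphism obtained by composing the projection G ⋊_Ψ ℤ → ℤ (which kills G) with the reduction ℤ → ℤ/nℤ. Then the kernel of π is a subgroup of index n in G ⋊_Ψ ℤ, and this kernel is isomorphic as a group to the mapping torus M_{Ψⁿ} = G ⋊_{Ψⁿ} ℤ. -/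
/-- The algebraic mapping torus `M_Ψ = G ⋊_Ψ ℤ` of a group `G` with automorphism `Ψ`. -/
abbrev MappingTorus {G : Type*} [Group G] (Ψ : MulAut G) :=
  SemidirectProduct G (Multiplicative ℤ) (zpowersHom (MulAut G) Ψ)

/-- The composite `π : M_Ψ → ℤ → ℤ/nℤ` killing `G` has kernel of index `n`, and this
kernel is isomorphic to the mapping torus `M_{Ψⁿ}`. -/
theorem mappingTorus_power_is_finite_index_kernel {G : Type*} [Group G]
    (Ψ : MulAut G) (n : ℕ) (hn : 0 < n)
    (π : MappingTorus Ψ →* Multiplicative (ZMod n))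
    (hπ : π = (AddMonoidHom.toMultiplicative (Int.castAddHom (ZMod n))).comp
      SemidirectProduct.rightHom) :
    π.ker.index = n ∧ Nonempty (π.ker ≃* MappingTorus (Ψ ^ n)) := by
  have hmem : ∀ x : MappingTorus Ψ, x ∈ π.ker ↔ (n : ℤ) ∣ Multiplicative.toAdd x.right := by
    intro x
    rw [← CharP.intCast_eq_zero_iff (ZMod n) n, hπ]
    rfl
  constructor
  · have hsurj : Function.Surjective π := by
      intro z
      obtain ⟨k, hk⟩ := ZMod.intCast_surjective (Multiplicative.toAdd z)
      refine ⟨SemidirectProduct.inr (Multiplicative.ofAdd k), ?_⟩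
      rw [hπ]
      exact congrArg Multiplicative.ofAdd hk
    rw [Subgroup.index_ker, MonoidHom.range_eq_top.mpr hsurj, Subgroup.card_top]
    exact Nat.card_zmod n
  · let f : MappingTorus (Ψ ^ n) →* MappingTorus Ψ :=
      SemidirectProduct.map (MonoidHom.id G) (powMonoidHom n) (by
        intro g
        ext x
        simp [zpowersHom_apply, zpow_mul, ← zpow_natCast])
    have hinj : Function.Injective f := by
      intro x y h
      have h1 : x.left = y.left := by
        have h0 : (f x).left = (f y).left := by rw [h]
        exact h0
      have h2 : n • Multiplicative.toAdd x.right = n • Multiplicative.toAdd y.right :=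
        congrArg (fun z => Multiplicative.toAdd (SemidirectProduct.right z)) h
      have hn0 : (n : ℤ) ≠ 0 := by exact_mod_cast hn.ne'
      refine SemidirectProduct.ext h1 (Multiplicative.toAdd.injective ?_)
      simpa [hn0, hn.ne'] using h2
    have hrange : f.range = π.ker := by
      ext x
      rw [hmem]
      constructor
      · rintro ⟨y, rfl⟩
        exact ⟨Multiplicative.toAdd y.right, nsmul_eq_mul _ _⟩
      · rintro ⟨k, hk⟩
        refine ⟨⟨x.left, Multiplicative.ofAdd k⟩, SemidirectProduct.ext rfl ?_⟩
        apply Multiplicative.toAdd.injective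
        rw [hk]
        exact nsmul_eq_mul _ _
    exact ⟨((MonoidHom.ofInjective hinj).trans (MulEquiv.subgroupCongr hrange)).symm⟩
end

section
/- Let k, l ≥ 2 and let Ψ be an automorphism of the direct product F_k × F_l of free groups of ranks k and l. Then there exist an automorphism φ₁ of F_k, an automorphism φ₂ of F_l, and an element g ∈ F_k × F_l such that Ψ²(x) = g⁻¹·(φ₁ × φ₂)(x)·g for all x ∈ F_k × F_l, where (φ₁ × φ₂)(u, v) = (φ₁(u), φ₂(v)). That is, the class of Ψ² in Out(F_k × F_l) is represented by a product automorphism φ₁ × φ₂. -/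
lemma fg_center_aux {X : Type*} [Nontrivial X] (z : FreeGroup X)
    (hz : ∀ w, w * z = z * w) : z = 1 := by
  classical
  by_contra hne
  have hw : z.toWord ≠ [] := fun h => hne (FreeGroup.toWord_eq_nil_iff.1 h)
  obtain ⟨p, L, hL⟩ := List.exists_cons_of_ne_nil hw
  obtain ⟨c, hc⟩ := exists_ne p.1
  have h := congrArg FreeGroup.toWord (hz (FreeGroup.of c))
  have h1 : (FreeGroup.of c * z).toWord = (c, true) :: z.toWord := by
    rw [FreeGroup.toWord_mul, FreeGroup.toWord_of, List.singleton_append, FreeGroup.reduce.cons,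
      FreeGroup.reduce_toWord, hL]
    simp [hc]
  have h2 : ((z * FreeGroup.of c).toWord).Sublist (z.toWord ++ [(c, true)]) := by
    rw [FreeGroup.toWord_mul, FreeGroup.toWord_of]
    exact FreeGroup.Red.sublist FreeGroup.reduce.red
  rw [← h, h1] at h2
  have h3 := h2.eq_of_length (by simp)
  rw [hL] at h3
  simp only [List.cons_append, List.cons.injEq] at h3
  exact hc (by rw [← h3.1])

lemma fg_comm_trans {X : Type} (g x y : FreeGroup X) (hg : g ≠ 1)
    (hx : x * g = g * x) (hy : y * g = g * y) : x * y = y * x := by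
  let H : Subgroup (FreeGroup X) := Subgroup.centralizer {g}
  have mem : ∀ u : FreeGroup X, u * g = g * u → u ∈ H := fun u hu =>
    Subgroup.mem_centralizer_singleton_iff.2 hu
  let e := IsFreeGroup.toFreeGroup H
  have hzc : ∀ w : H, w * ⟨g, mem g rfl⟩ = ⟨g, mem g rfl⟩ * w := fun w =>
    Subtype.ext (Subgroup.mem_centralizer_singleton_iff.1 w.2)
  rcases subsingleton_or_nontrivial (IsFreeGroup.Generators H) with hs | hn
  · have key : ∀ u v : FreeGroup (IsFreeGroup.Generators H), u * v = v * u := by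
      rcases isEmpty_or_nonempty (IsFreeGroup.Generators H) with he | ⟨⟨a⟩⟩
      · intro u v
        exact Subsingleton.elim _ _
      · have : Unique (IsFreeGroup.Generators H) := ⟨⟨a⟩, fun b => Subsingleton.elim _ _⟩
        intro u v
        exact mul_comm' u v
    have h := key (e ⟨x, mem x hx⟩) (e ⟨y, mem y hy⟩)
    rw [← map_mul, ← map_mul] at h
    exact congrArg Subtype.val (e.injective h)
  · exfalso
    have := fg_center_aux (e ⟨g, mem g rfl⟩) (fun w => by
      obtain ⟨w, rfl⟩ := e.surjective w
      rw [← map_mul, ← map_mul, hzc])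
    rw [map_eq_one_iff e e.injective] at this
    exact hg (congrArg Subtype.val this)

lemma fg_noncomm {k : ℕ} (hk : 2 ≤ k) : ¬ ∀ u v : FreeGroup (Fin k), u * v = v * u := by
  intro h
  have : Nontrivial (Fin k) := Fin.nontrivial_iff_two_le.2 hk
  exact FreeGroup.of_ne_one (⟨0, by omega⟩ : Fin k) (fg_center_aux _ fun w => h _ _)

lemma fg_kill {k : ℕ} (hk : 2 ≤ k) {A B : Type*} [Group A] [Group B]
    (P : A × B →* FreeGroup (Fin k)) (hP : Function.Surjective P) :
    (∀ a, P (a, 1) = 1) ∨ (∀ b, P (1, b) = 1) := by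
  by_contra! hcon
  obtain ⟨⟨a, ha⟩, b, hb⟩ := hcon
  have hab : ∀ a b, P (a, 1) * P (1, b) = P (1, b) * P (a, 1) := by
    intro a b
    rw [← map_mul, ← map_mul]
    simp
  have hd : ∀ x : A × B, P x = P (x.1, 1) * P (1, x.2) := by
    intro x
    rw [← map_mul]
    simp
  have hA : ∀ a a', P (a, 1) * P (a', 1) = P (a', 1) * P (a, 1) := fun a a' =>
    fg_comm_trans _ _ _ hb (hab _ _) (hab _ _)
  have hB : ∀ b b', P (1, b) * P (1, b') = P (1, b') * P (1, b) := fun b b' =>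
    fg_comm_trans _ _ _ ha (hab _ _).symm (hab _ _).symm
  apply fg_noncomm hk
  intro u v
  obtain ⟨x, rfl⟩ := hP u
  obtain ⟨y, rfl⟩ := hP v
  rw [hd x, hd y]
  have c1 : Commute (P (x.1, 1)) (P (y.1, 1)) := hA _ _
  have c2 : Commute (P (x.1, 1)) (P (1, y.2)) := hab _ _
  have c3 : Commute (P (1, x.2)) (P (y.1, 1)) := (hab _ _).symm
  have c4 : Commute (P (1, x.2)) (P (1, y.2)) := hB _ _
  exact ((c1.mul_right c2).mul_left (c3.mul_right c4))

/-- an automorphism preserving both factors is a product -/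
lemma fg_prod {A B : Type*} [Group A] [Group B] (Φ : MulAut (A × B))
    (h1 : ∀ b, (Φ (1, b)).1 = 1) (h2 : ∀ a, (Φ (a, 1)).2 = 1) :
    ∃ (φ₁ : MulAut A) (φ₂ : MulAut B), ∀ x, Φ x = (φ₁ x.1, φ₂ x.2) := by
  have hd : ∀ x : A × B, Φ x = ((Φ (x.1, 1)).1, (Φ (1, x.2)).2) := by
    intro x
    have : x = (x.1, 1) * (1, x.2) := by simp
    conv_lhs => rw [this, map_mul]
    ext <;> simp [h1, h2]
  let f : A →* A := (MonoidHom.fst A B).comp (Φ.toMonoidHom.comp (MonoidHom.inl A B))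
  let g : B →* B := (MonoidHom.snd A B).comp (Φ.toMonoidHom.comp (MonoidHom.inr A B))
  have hdd : ∀ x, Φ x = (f x.1, g x.2) := hd
  have hf : Function.Bijective f := by
    constructor
    · intro a a' h
      have : Φ (a, 1) = Φ (a', 1) := by rw [hdd, hdd (a', 1)]; simp [h]
      simpa using Φ.injective this
    · intro a
      obtain ⟨x, hx⟩ := Φ.surjective (a, 1)
      exact ⟨x.1, by rw [hdd] at hx; exact congrArg Prod.fst hx⟩
  have hg : Function.Bijective g := by
    constructor
    · intro a a' h
      have : Φ (1, a) = Φ (1, a') := by rw [hdd, hdd (1, a')]; simp [h]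
      simpa using Φ.injective this
    · intro a
      obtain ⟨x, hx⟩ := Φ.surjective (1, a)
      exact ⟨x.2, by rw [hdd] at hx; exact congrArg Prod.snd hx⟩
  exact ⟨MulEquiv.ofBijective f hf, MulEquiv.ofBijective g hg, fun x => hdd x⟩

/-- For `k, l ≥ 2` and any automorphism `Ψ` of `F_k × F_l`, the class of `Ψ²` in
`Out(F_k × F_l)` is represented by a product automorphism `φ₁ × φ₂`. -/
theorem aut_sq_of_product_of_free_groups_is_product
    (k l : ℕ) (hk : 2 ≤ k) (hl : 2 ≤ l)
    (Ψ : MulAut (FreeGroup (Fin k) × FreeGroup (Fin l))) :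
    ∃ (φ₁ : MulAut (FreeGroup (Fin k))) (φ₂ : MulAut (FreeGroup (Fin l)))
      (g : FreeGroup (Fin k) × FreeGroup (Fin l)),
      ∀ x : FreeGroup (Fin k) × FreeGroup (Fin l),
        Ψ (Ψ x) = g⁻¹ * (φ₁ x.1, φ₂ x.2) * g := by
  have k1 : (∀ a, (Ψ (a, 1)).1 = 1) ∨ (∀ b, (Ψ (1, b)).1 = 1) :=
    fg_kill hk ((MonoidHom.fst _ _).comp Ψ.toMonoidHom)
      (Prod.fst_surjective.comp Ψ.surjective)
  have k2 : (∀ a, (Ψ (a, 1)).2 = 1) ∨ (∀ b, (Ψ (1, b)).2 = 1) :=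
    fg_kill hl ((MonoidHom.snd _ _).comp Ψ.toMonoidHom)
      (Prod.snd_surjective.comp Ψ.surjective)
  have main : (∀ b, ((Ψ * Ψ) (1, b)).1 = 1) ∧ (∀ a, ((Ψ * Ψ) (a, 1)).2 = 1) := by
    rcases k1 with k1 | k1 <;> rcases k2 with k2 | k2
    · exfalso
      have : Ψ (FreeGroup.of ⟨0, by omega⟩, 1) = 1 := Prod.ext (k1 _) (k2 _)
      rw [map_eq_one_iff Ψ Ψ.injective] at this
      exact FreeGroup.of_ne_one _ (congrArg Prod.fst this)
    · constructor
      · intro b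
        have : Ψ (1, b) = ((Ψ (1, b)).1, 1) := Prod.ext rfl (k2 b)
        rw [MulAut.mul_apply, this]
        exact k1 _
      · intro a
        have : Ψ (a, 1) = (1, (Ψ (a, 1)).2) := Prod.ext (k1 a) rfl
        rw [MulAut.mul_apply, this]
        exact k2 _
    · constructor
      · intro b
        have : Ψ (1, b) = (1, (Ψ (1, b)).2) := Prod.ext (k1 b) rfl
        rw [MulAut.mul_apply, this]
        exact k1 _
      · intro a
        have : Ψ (a, 1) = ((Ψ (a, 1)).1, 1) := Prod.ext rfl (k2 a)
        rw [MulAut.mul_apply, this]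
        exact k2 _
    · exfalso
      have : Ψ (1, FreeGroup.of ⟨0, by omega⟩) = 1 := Prod.ext (k1 _) (k2 _)
      rw [map_eq_one_iff Ψ Ψ.injective] at this
      exact FreeGroup.of_ne_one _ (congrArg Prod.snd this)
  obtain ⟨φ₁, φ₂, h⟩ := fg_prod (Ψ * Ψ) main.1 main.2
  refine ⟨φ₁, φ₂, 1, fun x => ?_⟩
  rw [inv_one, one_mul, mul_one, ← h x, MulAut.mul_apply]
end

section
/- Let G = ℤ² * ℤ be the free product of ℤ² and ℤ, with canonical inclusions ι₁ : ℤ² → G and ι₂ : ℤ → G, and write c := ι₂(1). For every automorphism Ψ of G there exist an automorphism Φ of G and an element h ∈ G such that: (i) Ψ(x) = h⁻¹·Φ(x)·h for all x ∈ G; (ii) there is an automorphism φ of ℤ² with Φ(ι₁(v)) = ι₁(φ(v)) for all v ∈ ℤ² (Φ restricts to an automorphism of the ℤ² factor); and (iii) there exist w, x ∈ ℤ² and ε ∈ {1, −1} such that Φ(c) = ι₁(w)·ι₂(ε)·ι₁(x). -/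
/-- The free product `ℤ² * ℤ`. -/
abbrev Z2astZ : Type := Monoid.Coprod (Multiplicative (ℤ × ℤ)) (Multiplicative ℤ)

/-- The canonical inclusion `ι₁ : ℤ² → ℤ² * ℤ`. -/
def iota1 (v : ℤ × ℤ) : Z2astZ := Monoid.Coprod.inl (Multiplicative.ofAdd v)

/-- The canonical inclusion `ι₂ : ℤ → ℤ² * ℤ`. -/
def iota2 (n : ℤ) : Z2astZ := Monoid.Coprod.inr (Multiplicative.ofAdd n)

/-- The generator `c` of the `ℤ` free factor. -/
def cGen : Z2astZ := iota2 1


namespace Z2Z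

open Monoid.Coprod

/-- The `ℤ²` factor. -/
abbrev A : Type := Multiplicative (ℤ × ℤ)

/-- The letters `a c^{±1}`. -/
abbrev Letter : Type := A × Bool

/-- Adjacency relation for reduced words. -/
def Red (p q : Letter) : Prop := q.1 ≠ 1 ∨ p.2 = q.2

/-- Vertices of the Bass-Serre tree, as reduced words. -/
abbrev X : Type := {l : List Letter // l.IsChain Red}

/-- The base vertex. -/
def o : X := ⟨[], List.isChain_nil⟩

/-- Common prefix length. -/
def lcp : List Letter → List Letter → ℕ
  | a :: l, b :: m => if a = b then lcp l m + 1 else 0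
  | [], _ => 0
  | _ :: _, [] => 0

/-- Tree distance. -/
def dst (l m : List Letter) : ℤ := (l.length : ℤ) + m.length - 2 * lcp l m

theorem lcp_nil_left (l) : lcp [] l = 0 := by cases l <;> rfl
theorem lcp_nil_right (l) : lcp l [] = 0 := by cases l <;> rfl
theorem lcp_cons (a l b m) : lcp (a :: l) (b :: m) = if a = b then lcp l m + 1 else 0 := rfl

theorem lcp_comm (l m) : lcp l m = lcp m l := by
  induction l generalizing m with
  | nil => simp [lcp_nil_left, lcp_nil_right]
  | cons a l ih =>
    cases m with
    | nil => simp [lcp_nil_left, lcp_nil_right]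
    | cons b m => simp only [lcp_cons, ih m, eq_comm]

theorem lcp_le_left (l m) : lcp l m ≤ l.length := by
  induction l generalizing m with
  | nil => simp [lcp_nil_left]
  | cons a l ih =>
    cases m with
    | nil => simp [lcp_nil_right]
    | cons b m =>
      have := ih m
      simp only [lcp_cons, List.length_cons]
      split_ifs <;> omega

theorem lcp_hyp (l m n) : min (lcp l m) (lcp m n) ≤ lcp l n := by
  induction l generalizing m n with
  | nil => simp [lcp_nil_left]
  | cons a l ih =>
    cases m with
    | nil => simp [lcp_nil_right]
    | cons b m =>
      cases n with
      | nil => simp [lcp_nil_right]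
      | cons c n =>
        have := ih m n
        simp only [lcp_cons]
        by_cases h1 : a = b
        · by_cases h2 : b = c
          · subst h1; subst h2; simp; omega
          · simp [h2]
        · simp [h1]

theorem take_of_lcp (l m) (i : ℕ) (h : i ≤ lcp l m) : l.take i = m.take i := by
  induction l generalizing m i with
  | nil => simp [lcp_nil_left] at h; subst h; simp
  | cons a l ih =>
    cases m with
    | nil => simp [lcp_nil_right] at h; subst h; simp
    | cons b m =>
      cases i with
      | zero => simp
      | succ i =>
        simp only [lcp_cons] at h
        split_ifs at h with hab
        · subst hab
          simp [ih m i (by omega)]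
        · omega

/-- Action of `c^{±1}` on words. -/
def cact (e : Bool) : List Letter → List Letter
  | [] => [(1, e)]
  | p :: l => if p = (1, !e) then l else (1, e) :: p :: l

/-- Action of `A` on words. -/
def aact (a : A) : List Letter → List Letter
  | [] => []
  | p :: l => (a * p.1, p.2) :: l

theorem cact_red (e l) (h : List.IsChain Red l) : List.IsChain Red (cact e l) := by
  cases l with
  | nil => simp [cact]
  | cons p l =>
    simp only [cact]
    split_ifs with hp
    · exact h.tail
    · refine List.isChain_cons_cons.2 ⟨?_, h⟩
      obtain ⟨a, e'⟩ := p
      unfold Red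
      by_cases ha : a = 1
      · right
        subst ha
        simp at hp
        cases e <;> cases e' <;> simp_all
      · exact Or.inl ha

theorem aact_red (a l) (h : List.IsChain Red l) : List.IsChain Red (aact a l) := by
  cases l with
  | nil => simp [aact]
  | cons p l =>
    cases l with
    | nil => simp [aact]
    | cons q l =>
      simp only [aact]
      rw [List.isChain_cons_cons] at h ⊢
      exact h

theorem cact_cact (e l) (h : List.IsChain Red l) : cact (!e) (cact e l) = l := by
  cases l with
  | nil => simp [cact]
  | cons p l =>
    simp only [cact]
    split_ifs with hp
    · cases l with
      | nil => simp [cact, hp]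
      | cons q l =>
        rw [List.isChain_cons_cons] at h
        have h1 := h.1
        simp only [cact]
        rw [if_neg]
        · rw [hp]
        · rintro rfl
          subst hp
          cases e <;> simp [Red] at h1
    · simp [cact]

/-- `c` as a permutation. -/
def cperm : Equiv.Perm X where
  toFun x := ⟨cact true x.1, cact_red _ _ x.2⟩
  invFun x := ⟨cact false x.1, cact_red _ _ x.2⟩
  left_inv x := Subtype.ext (cact_cact true x.1 x.2)
  right_inv x := Subtype.ext (cact_cact false x.1 x.2)

theorem aact_one (l) : aact 1 l = l := by cases l <;> simp [aact]
theorem aact_mul (a b l) : aact (a * b) l = aact a (aact b l) := by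
  cases l <;> simp [aact, mul_assoc]

/-- `a` as a permutation. -/
def aperm : A →* Equiv.Perm X where
  toFun a :=
    { toFun := fun x => ⟨aact a x.1, aact_red _ _ x.2⟩
      invFun := fun x => ⟨aact a⁻¹ x.1, aact_red _ _ x.2⟩
      left_inv := fun x => Subtype.ext (by simp [← aact_mul, aact_one])
      right_inv := fun x => Subtype.ext (by simp [← aact_mul, aact_one]) }
  map_one' := by ext x : 2; simp [aact_one]
  map_mul' a b := by ext x : 2; simp [aact_mul]

/-- The action of the free product on the tree. -/
def act : Z2astZ →* Equiv.Perm X := lift aperm (zpowersHom _ cperm)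

/-- `c^{±1}` in the group. -/
def C (e : Bool) : Z2astZ := inr (Multiplicative.ofAdd (if e then 1 else -1))

theorem C_inv (e) : (C e)⁻¹ = C (!e) := by
  unfold C; rw [← map_inv]; cases e <;> rfl

theorem act_inl (a : A) (x : X) : (act (inl a) x).1 = aact a x.1 := by
  simp [act, aperm]

theorem act_C (e) (x : X) : (act (C e) x).1 = cact e x.1 := by
  cases e
  · simp [act, C]; rfl
  · simp [act, C]; rfl

theorem gen (S : Subgroup Z2astZ) (h1 : ∀ a : A, inl a ∈ S) (h2 : C true ∈ S) (g) : g ∈ S := by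
  induction g using Monoid.Coprod.induction_on with
  | inl a => exact h1 a
  | inr n =>
    have : (inr n : Z2astZ) = C true ^ (Multiplicative.toAdd n) := by
      unfold C; rw [← map_zpow, ← ofAdd_zsmul]; simp
    rw [this]; exact S.zpow_mem h2 _
  | mul x y hx hy => exact S.mul_mem hx hy

theorem dst_aact (a l m) : dst (aact a l) (aact a m) = dst l m := by
  cases l <;> cases m <;> simp [aact, dst, lcp_cons, lcp_nil_left, lcp_nil_right, Prod.ext_iff]

theorem cact_ne (e) (l : List Letter) (h : List.IsChain Red ((1, !e) :: l)) (m) :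
    lcp l ((1, e) :: m) = 0 := by
  cases l with
  | nil => simp [lcp_nil_left]
  | cons q l =>
    rw [List.isChain_cons_cons] at h
    rw [lcp_cons, if_neg]
    rintro rfl
    have h1 := h.1
    cases e <;> simp [Red] at h1

theorem lcp_cact_aux (e) (l m : List Letter) (hl : List.IsChain Red ((1, !e) :: l))
    (hm : ∀ m', m ≠ (1, !e) :: m') :
    dst l (cact e m) = dst ((1, !e) :: l) m := by
  have h1 : cact e m = (1, e) :: m := by
    cases m with
    | nil => rfl
    | cons q m =>
      simp only [cact]
      rw [if_neg]
      rintro rfl; exact hm m rfl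
  have h2 : lcp ((1, !e) :: l) m = 0 := by
    cases m with
    | nil => rfl
    | cons q m =>
      rw [lcp_cons, if_neg]
      rintro rfl; exact hm m rfl
  rw [h1]
  simp only [dst, cact_ne e l hl m, h2]
  simp
  ring

theorem dst_comm (l m) : dst l m = dst m l := by
  unfold dst; rw [lcp_comm]; ring

theorem dst_cact (e l m) (hl : List.IsChain Red l) (hm : List.IsChain Red m) :
    dst (cact e l) (cact e m) = dst l m := by
  by_cases h1 : ∃ l', l = (1, !e) :: l'
  · obtain ⟨l', rfl⟩ := h1
    by_cases h2 : ∃ m', m = (1, !e) :: m'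
    · obtain ⟨m', rfl⟩ := h2
      simp [cact, dst, lcp_cons]
      ring
    · push Not at h2
      rw [← lcp_cact_aux e l' m hl h2]
      simp [cact]
  · by_cases h2 : ∃ m', m = (1, !e) :: m'
    · obtain ⟨m', rfl⟩ := h2
      push Not at h1
      rw [dst_comm _ (_ :: _), ← lcp_cact_aux e m' l hm h1, dst_comm]
      simp [cact]
    · push Not at h1 h2
      have key : ∀ m : List Letter, (∀ m', m ≠ (1, !e) :: m') → cact e m = (1, e) :: m := by
        intro m hm
        cases m with
        | nil => rfl
        | cons q m =>
          simp only [cact]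
          rw [if_neg]
          rintro rfl; exact hm m rfl
      rw [key l h1, key m h2]
      simp [dst, lcp_cons]
      ring

theorem act_inv_apply (g) (x : X) : act g (act g⁻¹ x) = x := by
  rw [← Equiv.Perm.mul_apply, ← map_mul]; simp
theorem act_inv_apply' (g) (x : X) : act g⁻¹ (act g x) = x := by
  rw [← Equiv.Perm.mul_apply, ← map_mul]; simp

theorem dst_act (g) (x y : X) : dst (act g x).1 (act g y).1 = dst x.1 y.1 := by
  let S : Subgroup Z2astZ :=
    { carrier := {g | ∀ x y : X, dst (act g x).1 (act g y).1 = dst x.1 y.1}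
      one_mem' := by intro x y; simp
      mul_mem' := by
        intro g h hg hh x y
        simp only [map_mul, Equiv.Perm.mul_apply]
        rw [hg, hh]
      inv_mem' := by
        intro g hg x y
        rw [← hg, act_inv_apply, act_inv_apply] }
  refine gen S ?_ ?_ g x y
  · intro a x y
    simp only [act_inl, dst_aact]
  · intro x y
    simp only [act_C, dst_cact _ _ _ x.2 y.2]

/-- Evaluation of words. -/
def ev : List Letter → Z2astZ
  | [] => 1
  | p :: l => inl p.1 * C p.2 * ev l

theorem ev_act (g) (x : X) : ∃ a : A, g * ev x.1 = ev (act g x).1 * inl a := by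
  let S : Subgroup Z2astZ :=
    { carrier := {g | ∀ x : X, ∃ a : A, g * ev x.1 = ev (act g x).1 * inl a}
      one_mem' := by intro x; exact ⟨1, by simp⟩
      mul_mem' := by
        intro g h hg hh x
        obtain ⟨a, ha⟩ := hh x
        obtain ⟨b, hb⟩ := hg (act h x)
        refine ⟨b * a, ?_⟩
        rw [mul_assoc, ha, ← mul_assoc, hb, map_mul, map_mul, mul_assoc]; rfl
      inv_mem' := by
        intro g hg x
        obtain ⟨a, ha⟩ := hg (act g⁻¹ x)
        refine ⟨a⁻¹, ?_⟩
        rw [act_inv_apply] at ha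
        rw [inv_mul_eq_iff_eq_mul, ← mul_assoc, ha]; simp }
  refine gen S ?_ ?_ g x
  · rintro a ⟨l, hl⟩
    rw [act_inl]
    cases l with
    | nil => exact ⟨a, by simp [aact, ev]⟩
    | cons p l => exact ⟨1, by simp [aact, ev, mul_assoc]⟩
  · rintro ⟨l, hl⟩
    rw [act_C]
    refine ⟨1, ?_⟩
    cases l with
    | nil => simp [cact, ev]
    | cons p l =>
      simp only [cact]
      split_ifs with hp
      · subst hp
        simp only [ev, ← C_inv]; simp
      · simp [ev, mul_assoc]

theorem act_ev (l) (h : List.IsChain Red l) : (act (ev l) o).1 = l := by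
  induction l with
  | nil => simp [ev, o]
  | cons p l ih =>
    obtain ⟨a, e⟩ := p
    have := ih h.tail
    simp only [ev, map_mul, Equiv.Perm.mul_apply]
    rw [act_inl, act_C, this]
    have h1 : cact e l = (1, e) :: l := by
      cases l with
      | nil => rfl
      | cons q l =>
        simp only [cact]
        rw [if_neg]
        rintro rfl
        rw [List.isChain_cons_cons] at h
        have h1 := h.1
        cases e <;> simp [Red] at h1
    rw [h1]; simp [aact]

/-- Length. -/
def len (g : Z2astZ) : ℕ := (act g o).1.length

theorem nf (g : Z2astZ) : ∃ (l : List Letter) (a : A), List.IsChain Red l ∧ l.length = len g ∧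
    g = ev l * inl a := by
  obtain ⟨a, ha⟩ := ev_act g o
  exact ⟨_, a, (act g o).2, rfl, by simpa [o, ev] using ha⟩

theorem act_inl_o (a : A) : act (inl a) o = o := Subtype.ext (by rw [act_inl]; rfl)

theorem len_inl (a : A) : len (inl a) = 0 := by rw [len, act_inl_o]; rfl

theorem len_eq_zero {g} (h : len g = 0) : ∃ a : A, g = inl a := by
  obtain ⟨l, a, _, h2, h3⟩ := nf g
  rw [h, List.length_eq_zero_iff] at h2
  subst h2
  exact ⟨a, by simpa [ev] using h3⟩

theorem fix_o {g} (h : act g o = o) : ∃ a : A, g = inl a :=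
  len_eq_zero (by rw [len, h]; rfl)

theorem len_eq_one {g} (h : len g = 1) : ∃ (a b : A) (e : Bool), g = inl a * C e * inl b := by
  obtain ⟨l, b, _, h2, h3⟩ := nf g
  rw [h, List.length_eq_one_iff] at h2
  obtain ⟨p, rfl⟩ := h2
  exact ⟨p.1, b, p.2, by simpa [ev] using h3⟩

theorem len_C (e) : len (C e) = 1 := by
  rw [len, act_C]; simp [o, cact]

theorem len_inv_mul (g h) : (len (g⁻¹ * h) : ℤ) = dst (act g o).1 (act h o).1 := by
  have : dst (act g o).1 (act h o).1 = dst o.1 (act (g⁻¹ * h) o).1 := by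
    rw [← dst_act g⁻¹, act_inv_apply', map_mul, Equiv.Perm.mul_apply]
  rw [this]; simp [dst, o, lcp_nil_left, len]

theorem len_inv (g) : len g⁻¹ = len g := by
  have := len_inv_mul g 1
  simp [dst, o, lcp_nil_right] at this
  exact this

theorem len_mul_inl (g) (a : A) : len (g * inl a) = len g := by
  rw [len, map_mul, Equiv.Perm.mul_apply, act_inl_o, len]

theorem len_inl_mul (g) (a : A) : len (inl a * g) = len g := by
  rw [← len_inv, mul_inv_rev, ← map_inv, len_mul_inl, len_inv]

/-- Twice the Gromov product. -/
def D (g h : Z2astZ) : ℤ := len g + len h - len (g⁻¹ * h)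

theorem D_eq (g h) : D g h = 2 * lcp (act g o).1 (act h o).1 := by
  rw [D, len_inv_mul, dst, len, len]; ring

theorem D_hyp (g h p) : D g h ≤ D g p ∨ D h p ≤ D g p := by
  rw [D_eq, D_eq, D_eq]
  have := lcp_hyp (act g o).1 (act h o).1 (act p o).1
  omega

theorem D_comm (g h) : D g h = D h g := by rw [D_eq, D_eq, lcp_comm]

theorem len_conj (z) (a : A) (ha : a ≠ 1) : len (z * inl a * z⁻¹) = 2 * len z := by
  have h := len_inv_mul z⁻¹ (inl a * z⁻¹)
  have h2 : lcp (act z⁻¹ o).1 (aact a (act z⁻¹ o).1) = 0 := by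
    rcases (act z⁻¹ o).1 with _ | ⟨p, l⟩
    · rfl
    · simp only [aact]
      rw [lcp_cons, if_neg]
      intro hh
      have := congrArg Prod.fst hh
      simp at this
      exact ha this
  have h3 : (aact a (act z⁻¹ o).1).length = (act z⁻¹ o).1.length := by
    rcases (act z⁻¹ o).1 with _ | ⟨p, l⟩ <;> simp [aact]
  rw [map_mul, Equiv.Perm.mul_apply, act_inl, dst, h2, h3] at h
  have h4 := len_inv z
  rw [len] at h4
  rw [h4] at h
  simp only [inv_inv] at h
  rw [mul_assoc]
  omega

theorem malnormal {z : Z2astZ} {a b : A} (ha : a ≠ 1) (h : z * inl a * z⁻¹ = inl b) :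
    ∃ c : A, z = inl c := by
  apply len_eq_zero
  have h1 := len_conj z a ha
  rw [h, len_inl] at h1
  omega

theorem lcp_take (l : List Letter) (j : ℕ) (h : j ≤ l.length) : lcp l (l.take j) = j := by
  induction l generalizing j with
  | nil => simp at h; subst h; simp [lcp_nil_left]
  | cons a l ih =>
    cases j with
    | zero => simp [lcp_nil_right]
    | succ j =>
      simp at h
      simp [lcp_cons, ih j h]

/-- Initial segment of a vertex. -/
def tk (x : X) (j : ℕ) : X := ⟨x.1.take j, x.2.take j⟩

theorem tk_val (x : X) (j : ℕ) : (tk x j).1 = x.1.take j := rfl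

theorem dst_tk (x : X) (j : ℕ) (h : j ≤ x.1.length) : dst x.1 (tk x j).1 = x.1.length - j := by
  rw [tk_val, dst, lcp_take _ _ h, List.length_take, min_eq_left h]; ring

theorem dst_o_left (x : X) : dst o.1 x.1 = x.1.length := by
  simp [dst, o, lcp_nil_left]

theorem dst_o_right (x : X) : dst x.1 o.1 = x.1.length := by
  simp [dst, o, lcp_nil_right]

theorem eq_tk (p w : X) (i : ℕ) (h1 : p.1.length = i) (h2 : dst p.1 w.1 = w.1.length - i) :
    p = tk w i := by
  apply Subtype.ext
  have h3 : lcp p.1 w.1 = i := by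
    unfold dst at h2; omega
  have := take_of_lcp p.1 w.1 i h3.ge
  rw [tk_val, ← this, ← h1, List.take_length]

theorem move (s : Z2astZ) (j : ℕ) (h : j ≤ len s) :
    act s (tk (act s⁻¹ o) j) = tk (act s o) (len s - j) := by
  have hk : (act s⁻¹ o).1.length = len s := len_inv s
  apply eq_tk
  · have h1 := dst_act s (act s⁻¹ o) (tk (act s⁻¹ o) j)
    rw [act_inv_apply, dst_tk _ _ (by omega), dst_o_left] at h1
    omega
  · rw [dst_act, dst_o_right, tk_val, List.length_take, hk, min_eq_left h]
    have : (act s o).1.length = len s := rfl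
    omega

theorem snd_C (e) : (snd (C e) : Multiplicative ℤ) = Multiplicative.ofAdd (if e then 1 else -1) := by
  simp [C]

theorem elliptic (s : Z2astZ) (h : len (s * s) ≤ len s) :
    ∃ (g : Z2astZ) (a : A), s = g * inl a * g⁻¹ := by
  have hD : D s⁻¹ s = len s + len s - len (s * s) := by
    rw [D, len_inv, inv_inv]
  rw [D_eq] at hD
  have hk : (act s o).1.length = len s := rfl
  have htk : ∀ j, j ≤ lcp (act s⁻¹ o).1 (act s o).1 → tk (act s⁻¹ o) j = tk (act s o) j :=
    fun j hj => Subtype.ext (take_of_lcp _ _ _ hj)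
  have hg : ∀ j, act (ev (tk (act s o) j).1) o = tk (act s o) j :=
    fun j => Subtype.ext (act_ev _ (tk (act s o) j).2)
  obtain ⟨m, hm | hm⟩ := Nat.even_or_odd' (len s)
  · have h1 := move s m (by omega)
    rw [htk m (by omega), show len s - m = m by omega] at h1
    generalize hgg : ev (tk (act s o) m).1 = g
    have h2 := hg m
    rw [hgg] at h2
    have h3 : act (g⁻¹ * s * g) o = o := by
      simp only [map_mul, Equiv.Perm.mul_apply]
      rw [h2, h1, ← h2, act_inv_apply']
    obtain ⟨a, ha⟩ := fix_o h3
    exact ⟨g, a, by rw [← ha]; group⟩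
  · exfalso
    have h1 := move s m (by omega)
    rw [htk m (by omega), show len s - m = m + 1 by omega] at h1
    have h1' := move s (m + 1) (by omega)
    rw [htk (m + 1) (by omega), show len s - (m + 1) = m by omega] at h1'
    generalize hgg : ev (tk (act s o) m).1 = g
    have h2 := hg m
    rw [hgg] at h2
    have h3 : act ((g⁻¹ * s * g) * (g⁻¹ * s * g)) o = o := by
      have : (g⁻¹ * s * g) * (g⁻¹ * s * g) = g⁻¹ * s * s * g := by group
      rw [this]
      simp only [map_mul, Equiv.Perm.mul_apply]
      rw [h2, h1, h1', ← h2, act_inv_apply']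
    obtain ⟨b, hb⟩ := fix_o h3
    have h4 : len (g⁻¹ * s * g) = 1 := by
      have := len_inv_mul g (s * g)
      rw [map_mul, Equiv.Perm.mul_apply, h2, h1] at this
      have h5 : tk (act s o) m = tk (tk (act s o) (m + 1)) m := by
        apply Subtype.ext
        simp [tk_val, List.take_take]
      have h6 : (tk (act s o) (m + 1)).1.length = m + 1 := by
        rw [tk_val, List.length_take]; omega
      rw [h5, dst_comm, dst_tk _ _ (by omega), h6, ← mul_assoc] at this
      omega
    obtain ⟨a, a', e, he⟩ := len_eq_one h4
    rw [he] at hb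
    have h7 := congrArg (snd : Z2astZ →* Multiplicative ℤ) hb
    simp only [map_mul, snd_apply_inl, snd_C, one_mul, mul_one] at h7
    have h8 := congrArg Multiplicative.toAdd h7
    cases e <;> simp at h8

theorem step {h h' p : Z2astZ} {k : ℕ} (hk : len h = k) (hk' : len h' = k)
    (hh : k < len (h * h')) (hp : (k : ℤ) < D h' p) :
    len p < len (h * p) ∧ (k : ℤ) < D h (h * p) := by
  have h1 : D h⁻¹ h' = len h + len h' - len (h * h') := by rw [D, len_inv, inv_inv]
  have h2 : D h⁻¹ p = len h + len p - len (h * p) := by rw [D, len_inv, inv_inv]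
  have h3 : D h (h * p) = len h + len (h * p) - len p := by rw [D, inv_mul_cancel_left]
  have h4 := D_hyp h⁻¹ p h'
  rw [D_comm p h'] at h4
  omega

theorem pow_len (x : Z2astZ) (h : len x < len (x * x)) (n : ℕ) :
    n + 1 ≤ len (x ^ (n + 1)) ∧ (len x : ℤ) < D x (x ^ (n + 1)) := by
  induction n with
  | zero =>
    have h1 : len x ≠ 0 := by
      intro h0
      obtain ⟨a, rfl⟩ := len_eq_zero h0
      rw [← map_mul, len_inl, len_inl] at h
      omega
    have h2 : len (1 : Z2astZ) = 0 := by simpa using len_inl 1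
    simp only [zero_add, pow_one, D, inv_mul_cancel, h2]
    omega
  | succ n ih =>
    have := step rfl rfl h ih.2
    rw [← pow_succ'] at this
    exact ⟨by omega, this.2⟩

theorem D_nonneg (g h) : 0 ≤ D g h := by rw [D_eq]; omega

theorem len_mul_le (g h) : len (g * h) ≤ len g + len h := by
  have := D_nonneg g⁻¹ h
  rw [D, len_inv, inv_inv] at this
  omega

theorem comm_pair_aux (N : ℕ) (x y : Z2astZ) (hN : len x + len y ≤ N) (hxy : x * y = y * x) :
    (∃ g, (∃ a : A, x = g * inl a * g⁻¹) ∧ (∃ b : A, y = g * inl b * g⁻¹)) ∨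
    (∃ u, x ∈ Subgroup.zpowers u ∧ y ∈ Subgroup.zpowers u) := by
  induction N using Nat.strong_induction_on generalizing x y with
  | _ N ih =>
  wlog hle : len x ≤ len y generalizing x y
  · rcases this y x (by omega) hxy.symm (by omega) with ⟨g, h1, h2⟩ | ⟨u, h1, h2⟩
    · exact Or.inl ⟨g, h2, h1⟩
    · exact Or.inr ⟨u, h2, h1⟩
  by_cases hx : x = 1
  · exact Or.inr ⟨y, by rw [hx]; exact Subgroup.one_mem _, Subgroup.mem_zpowers y⟩
  have hcomm : Commute x y := hxy
  by_cases hlt : ∃ n : ℤ, len (x ^ n * y) < len y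
  · obtain ⟨n, hn⟩ := hlt
    have hc : Commute x (x ^ n * y) := (Commute.self_zpow x n).mul_right hcomm
    have hy : y = (x ^ n)⁻¹ * (x ^ n * y) := by group
    rcases ih (len x + len (x ^ n * y)) (by omega) x (x ^ n * y) le_rfl hc with
      ⟨g, ⟨a, ha⟩, ⟨b, hb⟩⟩ | ⟨u, h1, h2⟩
    · left
      refine ⟨g, ⟨a, ha⟩, ⟨(a ^ n)⁻¹ * b, ?_⟩⟩
      rw [hy, hb]
      nth_rw 1 [ha]
      rw [conj_zpow, map_mul, map_inv, map_zpow]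
      group
    · right
      refine ⟨u, h1, ?_⟩
      rw [hy]
      exact Subgroup.mul_mem _ (Subgroup.inv_mem _ (Subgroup.zpow_mem _ h1 n)) h2
  push Not at hlt
  left
  have hconst : ∀ n : ℕ, len (x ^ n * y) = len y := by
    intro n
    induction n with
    | zero => simp
    | succ n ihn =>
      have e1 := D_hyp x (x * (x ^ n * y)) (x ^ n * y)
      have c1 : D x (x * (x ^ n * y)) = len x + len (x * (x ^ n * y)) - len (x ^ n * y) := by
        rw [D, inv_mul_cancel_left]
      have hcc : x * (x ^ n * y) = (x ^ n * y) * x :=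
        ((Commute.self_pow x n).mul_right hcomm).eq
      have c2 : D (x * (x ^ n * y)) (x ^ n * y)
          = len (x * (x ^ n * y)) + len (x ^ n * y) - len x := by
        rw [D]
        nth_rw 2 [hcc]
        rw [mul_inv_rev, inv_mul_cancel_right, len_inv]
      have c3 : D x (x ^ n * y) = len x + len (x ^ n * y) - len (x⁻¹ * (x ^ n * y)) := rfl
      have l1 := hlt (n + 1)
      have l2 := hlt (n - 1)
      have f1 : x ^ ((n : ℤ) + 1) * y = x * (x ^ n * y) := by
        rw [add_comm, zpow_add, zpow_one, zpow_natCast, mul_assoc]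
      have f2 : x ^ ((n : ℤ) - 1) * y = x⁻¹ * (x ^ n * y) := by
        rw [sub_eq_neg_add, zpow_add, zpow_neg_one, zpow_natCast, mul_assoc]
      rw [f1] at l1
      rw [f2] at l2
      rw [pow_succ', mul_assoc]
      omega
  have hell : len (x * x) ≤ len x := by
    by_contra hcon
    have h1 := (pow_len x (by omega) (2 * len y)).1
    have h2 := len_mul_le (x ^ (2 * len y + 1) * y) y⁻¹
    rw [hconst, mul_inv_cancel_right, len_inv] at h2
    omega
  obtain ⟨g, a, ha⟩ := elliptic x hell
  have ha1 : a ≠ 1 := by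
    rintro rfl
    apply hx
    rw [ha]; simp
  have hz : (g⁻¹ * y * g) * inl a * (g⁻¹ * y * g)⁻¹ = inl a := by
    have h1 : (inl a : Z2astZ) = g⁻¹ * x * g := by rw [ha]; group
    rw [h1, mul_inv_eq_iff_eq_mul]
    calc g⁻¹ * y * g * (g⁻¹ * x * g) = g⁻¹ * (y * x) * g := by group
      _ = g⁻¹ * (x * y) * g := by rw [hxy]
      _ = _ := by group
  obtain ⟨b, hb⟩ := malnormal ha1 hz
  exact ⟨g, ⟨a, ha⟩, ⟨b, by rw [← hb]; group⟩⟩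

theorem main_len (Φ : MulAut Z2astZ) (hA : ∀ a : A, ∃ b : A, Φ (inl a) = inl b)
    (hA' : ∀ (z) (b : A), Φ z = inl b → ∃ a : A, z = inl a) : len (Φ (C true)) = 1 := by
  generalize hk : len (Φ (C true)) = k
  have hsnd : (snd (Φ (C true)) : Multiplicative ℤ) ≠ 1 := by
    intro h0
    have := gen ((snd : Z2astZ →* Multiplicative ℤ).comp Φ.toMonoidHom).ker (by
      intro a
      obtain ⟨b, hb⟩ := hA a
      change snd (Φ (inl a)) = 1
      rw [hb]; simp) h0 (Φ.symm (C true))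
    change snd (Φ (Φ.symm (C true))) = 1 at this
    rw [MulEquiv.apply_symm_apply] at this
    simp [snd_C] at this
  have hkpos : 0 < k := by
    rcases Nat.eq_zero_or_pos k with h0 | h0
    · rw [h0] at hk
      obtain ⟨a, ha⟩ := len_eq_zero hk
      rw [ha] at hsnd
      simp at hsnd
    · exact h0
  have hkk : ∀ e, len (Φ (C e)) = k := by
    intro e
    cases e
    · rw [show C false = (C true)⁻¹ by rw [C_inv]; rfl, map_inv, len_inv, hk]
    · exact hk
  have hsame : ∀ e (a : A), k < len (Φ (C e) * inl a * Φ (C e)) := by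
    have key : ∀ a : A, k < len (Φ (C true) * inl a * Φ (C true)) := by
      intro a
      by_contra hcon
      have h1 : len ((Φ (C true) * inl a) * (Φ (C true) * inl a)) ≤ len (Φ (C true) * inl a) := by
        rw [← mul_assoc, len_mul_inl, len_mul_inl, hk]; omega
      obtain ⟨g, b, hb⟩ := elliptic _ h1
      apply hsnd
      have h2 := congrArg (snd : Z2astZ →* Multiplicative ℤ) hb
      simpa using h2
    intro e a
    cases e
    · have := key a⁻¹
      rw [← len_inv] at this
      rw [show C false = (C true)⁻¹ by rw [C_inv]; rfl, map_inv]
      simpa [mul_assoc] using this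
    · exact key a
  have hpair : ∀ p q : Letter, Red p q →
      k < len (Φ (inl p.1 * C p.2) * Φ (inl q.1 * C q.2)) := by
    rintro ⟨a, e⟩ ⟨b, f⟩ hr
    obtain ⟨a', ha'⟩ := hA a
    obtain ⟨b', hb'⟩ := hA b
    simp only [map_mul, ha', hb']
    rw [mul_assoc, len_inl_mul, ← mul_assoc]
    by_cases hef : e = f
    · subst hef; exact hsame _ _
    · have hf : C f = (C e)⁻¹ := by rw [C_inv]; cases e <;> cases f <;> simp_all
      have hb1 : b ≠ 1 := by
        rcases hr with hr | hr
        · exact hr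
        · exact absurd hr hef
      have hb1' : b' ≠ 1 := by
        rintro rfl
        apply hb1
        rw [map_one, map_eq_one_iff _ Φ.injective, ← map_one inl] at hb'
        exact inl_injective hb'
      rw [hf, map_inv, len_conj _ _ hb1', hkk]
      omega
  have hlen1 : ∀ p : Letter, len (Φ (inl p.1 * C p.2)) = k := by
    intro p
    obtain ⟨a', ha'⟩ := hA p.1
    rw [map_mul, ha', len_inl_mul, hkk]
  have hword : ∀ (l : List Letter) (p : Letter), List.IsChain Red (p :: l) →
      k ≤ len (Φ (ev (p :: l))) ∧ (k : ℤ) < D (Φ (inl p.1 * C p.2)) (Φ (ev (p :: l))) := by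
    intro l
    induction l with
    | nil =>
      intro p _
      have h2 : len (1 : Z2astZ) = 0 := by simpa using len_inl 1
      have := hlen1 p
      simp only [ev, mul_one, D, inv_mul_cancel, h2, this]
      omega
    | cons q l ih =>
      intro p hp
      rw [List.isChain_cons_cons] at hp
      obtain ⟨i1, i2⟩ := ih q hp.2
      have := step (hlen1 p) (hlen1 q) (hpair p q hp.1) i2
      rw [ev, map_mul]
      exact ⟨by omega, this.2⟩
  obtain ⟨l, a, hl, -, hg⟩ := nf (Φ.symm (C true))
  have h1 : Φ (ev l) * Φ (inl a) = C true := by rw [← map_mul, ← hg]; simp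
  obtain ⟨b, hb⟩ := hA a
  have h2 : len (Φ (ev l)) = 1 := by
    rw [← len_mul_inl _ b, ← hb, h1, len_C]
  cases l with
  | nil =>
    have h3 : len (1 : Z2astZ) = 0 := by simpa using len_inl 1
    simp [ev, h3] at h2
  | cons p l =>
    have := (hword l p hl).1
    omega

theorem not_cyclic (u : Z2astZ)
    (h1 : (inl (Multiplicative.ofAdd ((1 : ℤ), (0 : ℤ))) : Z2astZ) ∈ Subgroup.zpowers u)
    (h2 : (inl (Multiplicative.ofAdd ((0 : ℤ), (1 : ℤ))) : Z2astZ) ∈ Subgroup.zpowers u) :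
    False := by
  obtain ⟨m, hm⟩ := Subgroup.mem_zpowers_iff.1 h1
  obtain ⟨n, hn⟩ := Subgroup.mem_zpowers_iff.1 h2
  have hm' := congrArg (fun z => Multiplicative.toAdd ((fst : Z2astZ →* A) z)) hm
  have hn' := congrArg (fun z => Multiplicative.toAdd ((fst : Z2astZ →* A) z)) hn
  simp only [map_zpow, fst_apply_inl, toAdd_zpow, toAdd_ofAdd] at hm' hn'
  generalize Multiplicative.toAdd ((fst : Z2astZ →* A) u) = w at hm' hn'
  obtain ⟨p, q⟩ := w
  simp [Prod.ext_iff] at hm' hn'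
  obtain ⟨a1, a2⟩ := hm'
  obtain ⟨b1, b2⟩ := hn'
  rcases a2 with rfl | rfl
  · simp at a1
  · simp at b2

end Z2Z


open Monoid.Coprod Z2Z in
/-- Every automorphism `Ψ` of `ℤ² * ℤ` agrees, up to an inner automorphism, with an
automorphism `Φ` that restricts to an automorphism of the `ℤ²` factor and sends
`c` to `ι₁(w)·ι₂(±1)·ι₁(x)` for some `w, x ∈ ℤ²`. -/
theorem aut_Z2astZ_normal_form (Ψ : MulAut Z2astZ) :
    ∃ (Φ : MulAut Z2astZ) (h : Z2astZ),
      (∀ x : Z2astZ, Ψ x = h⁻¹ * Φ x * h) ∧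
      (∃ φ : Multiplicative (ℤ × ℤ) ≃* Multiplicative (ℤ × ℤ),
        ∀ v : ℤ × ℤ, Φ (iota1 v) = Monoid.Coprod.inl (φ (Multiplicative.ofAdd v))) ∧
      (∃ (w x : ℤ × ℤ) (ε : ℤ), (ε = 1 ∨ ε = -1) ∧
        Φ cGen = iota1 w * iota2 ε * iota1 x) := by
  let e1 : A := Multiplicative.ofAdd ((1 : ℤ), (0 : ℤ))
  let e2 : A := Multiplicative.ofAdd ((0 : ℤ), (1 : ℤ))
  have hcomm : Ψ (inl e1) * Ψ (inl e2) = Ψ (inl e2) * Ψ (inl e1) := by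
    have h : (inl e1 : Z2astZ) * inl e2 = inl e2 * inl e1 := by
      rw [← map_mul inl e1 e2, ← map_mul inl e2 e1, mul_comm]
    rw [← map_mul Ψ, h, map_mul Ψ]
  have hdec : ∀ v : A, v = e1 ^ (Multiplicative.toAdd v).1 * e2 ^ (Multiplicative.toAdd v).2 := by
    intro v
    apply Multiplicative.toAdd.injective
    simp [e1, e2]
  obtain ⟨g, ⟨a, ha⟩, ⟨b, hb⟩⟩ | ⟨u, h1, h2⟩ := comm_pair_aux _ _ _ le_rfl hcomm
  · let Φ : MulAut Z2astZ := MulAut.conj g⁻¹ * Ψ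
    have hΦ : ∀ x, Φ x = g⁻¹ * Ψ x * g := by intro x; simp [Φ]
    have hA : ∀ a : A, ∃ b : A, Φ (inl a) = inl b := by
      intro v
      refine ⟨a ^ (Multiplicative.toAdd v).1 * b ^ (Multiplicative.toAdd v).2, ?_⟩
      rw [hdec v, hΦ, map_mul, map_mul, map_zpow, map_zpow, map_zpow, map_zpow, ha, hb,
        conj_zpow, conj_zpow, ← hdec v, map_mul, map_zpow, map_zpow]
      group
    have he1 : e1 ≠ 1 := by
      intro h
      have := congrArg Multiplicative.toAdd h
      simp [e1] at this
    have hA' : ∀ (z) (b : A), Φ z = inl b → ∃ a : A, z = inl a := by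
      intro z b hz
      obtain ⟨c, hc⟩ := hA e1
      refine malnormal (b := e1) he1 ?_
      apply Φ.injective
      rw [map_mul, map_mul, map_inv, hz, hc, ← map_inv, ← map_mul, ← map_mul]
      simp
    have hfst : ∀ a : A, Φ (inl a) = inl (fst (Φ (inl a))) := by
      intro a
      obtain ⟨b, hb⟩ := hA a
      rw [hb]; simp
    have hfst' : ∀ a : A, Φ.symm (inl a) = inl (fst (Φ.symm (inl a))) := by
      intro a
      obtain ⟨b, hb⟩ := hA' (Φ.symm (inl a)) a (by simp)
      rw [hb]; simp
    let φ : A ≃* A :=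
      { toFun := fun v => fst (Φ (inl v))
        invFun := fun v => fst (Φ.symm (inl v))
        left_inv := fun v => by
          simp only
          rw [← hfst]; simp
        right_inv := fun v => by
          simp only
          rw [← hfst']; simp
        map_mul' := fun v w => by simp }
    refine ⟨Φ, g⁻¹, ?_, ⟨φ, fun v => hfst _⟩, ?_⟩
    · intro x
      rw [hΦ]; group
    · obtain ⟨w, x, e, he⟩ := len_eq_one (main_len Φ hA hA')
      refine ⟨Multiplicative.toAdd w, Multiplicative.toAdd x, if e then 1 else -1, ?_, ?_⟩
      · cases e <;> simp
      · exact he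
  · exfalso
    have aux : ∀ z, Ψ z ∈ Subgroup.zpowers u → z ∈ Subgroup.zpowers (Ψ.symm u) := by
      intro z hz
      obtain ⟨n, hn⟩ := Subgroup.mem_zpowers_iff.1 hz
      refine Subgroup.mem_zpowers_iff.2 ⟨n, ?_⟩
      rw [← map_zpow, hn]; simp
    exact not_cyclic _ (aux _ h1) (aux _ h2)
end

section
/- Let G = ℤ² * ℤ be the free product of ℤ² and ℤ, with canonical inclusions ι₁ : ℤ² → G and ι₂ : ℤ → G, and write c := ι₂(1). Let l, m be coprime integers. Suppose Φ and Φ' are automorphisms of G satisfying: Φ(ι₁(v)) = ι₁(v) and Φ'(ι₁(v)) = ι₁(v) for all v ∈ ℤ², Φ(c) = c·ι₁(l, m), and Φ'(c) = c·ι₁(1, 0). Then there exists an automorphism θ of G such that θ ∘ Φ = Φ' ∘ θ. Consequently the mapping tori G ⋊_Φ ℤ and G ⋊_{Φ'} ℤ are isomorphic. -/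
/-- If `l, m` are coprime, the automorphisms of `ℤ² * ℤ` fixing `ℤ²` pointwise and sending
`c` to `c·ι₁(l,m)` resp. `c·ι₁(1,0)` are conjugate in `Aut(ℤ² * ℤ)`; hence the corresponding
mapping tori are isomorphic. -/
theorem aut_Z2astZ_coprime_conjugate (l m : ℤ) (hcop : IsCoprime l m)
    (Φ Φ' : MulAut Z2astZ)
    (hΦ : ∀ v : ℤ × ℤ, Φ (iota1 v) = iota1 v)
    (hΦ' : ∀ v : ℤ × ℤ, Φ' (iota1 v) = iota1 v)
    (hc : Φ cGen = cGen * iota1 (l, m))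
    (hc' : Φ' cGen = cGen * iota1 (1, 0)) :
    (∃ θ : MulAut Z2astZ, ∀ g : Z2astZ, θ (Φ g) = Φ' (θ g)) ∧
      Nonempty (MappingTorus Φ ≃* MappingTorus Φ') := by
  have key : ∃ θ : MulAut Z2astZ, ∀ g : Z2astZ, θ (Φ g) = Φ' (θ g) := by
    obtain ⟨a, b, hab⟩ := hcop
    -- the matrix in `SL₂(ℤ)` sending `(l, m)` to `(1, 0)`
    let A : ℤ × ℤ ≃+ ℤ × ℤ :=
      { toFun := fun p => (a * p.1 + b * p.2, l * p.2 - m * p.1)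
        invFun := fun p => (l * p.1 - b * p.2, m * p.1 + a * p.2)
        left_inv := by
          rintro ⟨x, y⟩
          ext
          · simp only
            linear_combination x * hab
          · simp only
            linear_combination y * hab
        right_inv := by
          rintro ⟨x, y⟩
          ext
          · simp only
            linear_combination x * hab
          · simp only
            linear_combination y * hab
        map_add' := by
          rintro ⟨x, y⟩ ⟨z, w⟩
          ext
          · simp only [Prod.mk_add_mk]
            ring
          · simp only [Prod.mk_add_mk]
            ring }
    let θ : MulAut Z2astZ :=
      MulEquiv.coprodCongr (AddEquiv.toMultiplicative A) (MulEquiv.refl (Multiplicative ℤ))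
    have hθ1 : ∀ v, θ (iota1 v) = iota1 (A v) := fun v => rfl
    have hθc : θ cGen = cGen := rfl
    have hA : A (l, m) = (1, 0) := by
      ext
      · change a * l + b * m = 1
        exact hab
      · change l * m - m * l = 0
        ring
    refine ⟨θ, fun g => ?_⟩
    have hom : θ.toMonoidHom.comp Φ.toMonoidHom = Φ'.toMonoidHom.comp θ.toMonoidHom := by
      apply Monoid.Coprod.hom_ext
      · refine MonoidHom.ext fun v => ?_
        change θ (Φ (iota1 v.toAdd)) = Φ' (θ (iota1 v.toAdd))
        rw [hΦ, hθ1, hΦ']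
      · apply MonoidHom.ext_mint
        change θ (Φ cGen) = Φ' (θ cGen)
        rw [hc, map_mul, hθc, hθ1, hA, hc']
    exact DFunLike.congr_fun hom g
  refine ⟨key, ?_⟩
  obtain ⟨θ, hθ⟩ := key
  have hconj : Φ' = θ * Φ * θ⁻¹ := by
    rw [eq_mul_inv_iff_mul_eq]
    ext g
    exact (hθ g).symm
  refine ⟨SemidirectProduct.congr θ (MulEquiv.refl _) fun n => ?_⟩
  have h : θ * Φ ^ n.toAdd = Φ' ^ n.toAdd * θ := by
    rw [hconj, conj_zpow, inv_mul_cancel_right]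
  exact h
end
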